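/- Let f : 𝔹 → ℂ be holomorphic, F(x) = f(x)·x for x ∈ 𝔹, with F(0) = 0 and DF(0) = I (equivalently f(0) = 1). Assume F is biholomorphic on 𝔹. Then for every s ≥ 1 and every w ∈ X with ‖w‖ = 1, ‖(1/s!)·DˢF(0)(w,…,w)‖ ≤ s. -/

import Mathlib

open Metric Set

noncomputable section

/-- A holomorphic map is biholomorphic on an open set `s` if it is holomorphic and injective
on `s` and admits a holomorphic inverse on the image `f '' s`. -/
def IsBiholoOn {E₁ E₂ : Type*} [NormedAddCommGroup E₁] [NormedSpace ℂ E₁]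
    [NormedAddCommGroup E₂] [NormedSpace ℂ E₂] (f : E₁ → E₂) (s : Set E₁) : Prop :=
  DifferentiableOn ℂ f s ∧ Set.InjOn f s ∧
    ∃ g : E₂ → E₁, DifferentiableOn ℂ g (f '' s) ∧ ∀ x ∈ s, g (f x) = x


/-- Fourier coefficients of the Chebyshev polynomial `U_n(1 - y + y cos φ)`. -/
def lam : ℕ → ℤ → ℝ → ℝ
  | 0, k, _ => if k = 0 then 1 else 0
  | 1, k, y => if k = 0 then 2 * (1 - y) else if k = 1 ∨ k = -1 then y else 0
  | (n + 2), k, y => 2 * (1 - y) * lam (n + 1) k y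
      + y * (lam (n + 1) (k + 1) y + lam (n + 1) (k - 1) y) - lam n k y

/-- `y`-derivative of `lam`. -/
def dlam : ℕ → ℤ → ℝ → ℝ
  | 0, _, _ => 0
  | 1, k, _ => if k = 0 then -2 else if k = 1 ∨ k = -1 then 1 else 0
  | (n + 2), k, y => 2 * (1 - y) * dlam (n + 1) k y
      + y * (dlam (n + 1) (k + 1) y + dlam (n + 1) (k - 1) y) - dlam n k y
      - 2 * lam (n + 1) k y + (lam (n + 1) (k + 1) y + lam (n + 1) (k - 1) y)

theorem lam_hasDerivAt (n : ℕ) : ∀ (k : ℤ) (y : ℝ), HasDerivAt (lam n k) (dlam n k y) y := by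
  induction n using Nat.twoStepInduction with
  | zero => intro k y; simp only [dlam]; exact hasDerivAt_const y _
  | one =>
    intro k y
    by_cases h0 : k = 0
    · subst h0
      have : lam 1 0 = fun y => 2 * (1 - y) := by funext y; simp [lam]
      rw [this]
      have := ((hasDerivAt_id y).const_sub 1).const_mul 2
      exact this.congr_deriv (by simp [dlam])
    · by_cases h1 : k = 1 ∨ k = -1
      · have : lam 1 k = fun y => y := by funext y; simp [lam, h0, h1]
        rw [this]
        exact (hasDerivAt_id y).congr_deriv (by simp [dlam, h0, h1])
      · have : lam 1 k = fun y => 0 := by funext y; simp [lam, h0, h1]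
        rw [this]
        exact (hasDerivAt_const y (0 : ℝ)).congr_deriv (by simp [dlam, h0, h1])
  | more n ih1 ih2 =>
    intro k y
    have : lam (n + 2) k = fun y => 2 * (1 - y) * lam (n + 1) k y
      + y * (lam (n + 1) (k + 1) y + lam (n + 1) (k - 1) y) - lam n k y := by
      funext y; simp [lam]
    rw [this]
    have h := ((((hasDerivAt_id y).const_sub 1).const_mul 2).mul (ih2 k y)).add
      ((hasDerivAt_id y).mul ((ih2 (k+1) y).add (ih2 (k-1) y))) |>.sub (ih1 k y)
    exact h.congr_deriv (by simp [dlam]; ring)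

theorem lam_ode (n : ℕ) : ∀ (k : ℤ) (y : ℝ),
    k * lam n k y - (k + 1) * lam n (k + 1) y = y * (dlam n k y + dlam n (k + 1) y) := by
  induction n using Nat.twoStepInduction with
  | zero =>
    intro k y
    simp only [lam, dlam]
    by_cases h0 : k = 0
    · subst h0; simp
    · by_cases h1 : k + 1 = 0
      · have : (k : ℝ) + 1 = 0 := by exact_mod_cast h1
        simp [h0, this]
      · simp [h0, h1]
  | one =>
    intro k y
    by_cases h : k = -2 ∨ k = -1 ∨ k = 0 ∨ k = 1
    · rcases h with rfl | rfl | rfl | rfl <;> simp [lam, dlam] <;> ring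
    · push Not at h
      have a1 : k ≠ 0 := by omega
      have a2 : ¬ (k = 1 ∨ k = -1) := by omega
      have a3 : k + 1 ≠ 0 := by omega
      have a4 : ¬ (k + 1 = 1 ∨ k + 1 = -1) := by omega
      simp only [lam, dlam, if_neg a1, if_neg a2, if_neg a3, if_neg a4]; simp
  | more n ih1 ih2 =>
    intro k y
    have e0 := ih1 k y
    have e1 := ih2 k y
    have e2 := ih2 (k + 1) y
    have e3 := ih2 (k - 1) y
    simp only [lam, dlam]
    push_cast at e2 e3
    have r1 : k + 1 - 1 = k := by ring
    have r2 : k - 1 + 1 = k := by ring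
    rw [r2] at e3
    rw [r1]
    linear_combination 2 * (1 - y) * e1 + y * (e2 + e3) - e0

theorem lam_zero_of_lt (n : ℕ) : ∀ (k : ℤ) (y : ℝ), (n : ℤ) < k → lam n k y = 0 := by
  induction n using Nat.twoStepInduction with
  | zero => intro k y h; simp [lam]; push_cast at h; omega
  | one =>
    intro k y h; push_cast at h
    have a1 : k ≠ 0 := by omega
    have a2 : ¬ (k = 1 ∨ k = -1) := by omega
    simp only [lam, if_neg a1, if_neg a2]
  | more n ih1 ih2 =>
    intro k y h
    push_cast at h ih2
    simp only [lam]
    rw [ih1 k y (by omega), ih2 k y (by omega), ih2 (k+1) y (by omega), ih2 (k-1) y (by omega)]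
    ring

theorem lam_at_one (n : ℕ) : ∀ (k : ℤ), lam n k 1 =
    if -(n : ℤ) ≤ k ∧ k ≤ n ∧ (n - k) % 2 = 0 then 1 else 0 := by
  induction n using Nat.twoStepInduction with
  | zero =>
    intro k
    simp only [lam]
    by_cases h : k = 0
    · subst h; simp
    · rw [if_neg h, if_neg]; push_cast; omega
  | one =>
    intro k
    by_cases h : k = 0
    · subst h; simp [lam]
    · by_cases h1 : k = 1 ∨ k = -1
      · simp only [lam, if_neg h, if_pos h1]; rw [if_pos]; push_cast; omega
      · simp only [lam, if_neg h, if_neg h1]; rw [if_neg]; push_cast; omega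
  | more n ih1 ih2 =>
    intro k
    simp only [lam]
    rw [ih1, ih2, ih2, ih2]
    push_cast
    by_cases p : (n - k) % 2 = 0
    · have q1 : ((n:ℤ) + 1 - (k + 1)) % 2 = 0 := by omega
      have q2 : ((n:ℤ) + 1 - (k - 1)) % 2 = 0 := by omega
      have q3 : ((n:ℤ) + 2 - k) % 2 = 0 := by omega
      simp only [p, q1, q2, q3, and_true]
      split_ifs <;> first | omega | norm_num
    · have q1 : ¬ ((n:ℤ) + 1 - (k + 1)) % 2 = 0 := by omega
      have q2 : ¬ ((n:ℤ) + 1 - (k - 1)) % 2 = 0 := by omega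
      have q3 : ¬ ((n:ℤ) + 2 - k) % 2 = 0 := by omega
      simp [p, q1, q2, q3]

theorem lam_at_one_add (n : ℕ) (k : ℕ) (hk : k ≤ n) : lam n k 1 + lam n (k + 1) 1 = 1 := by
  rw [lam_at_one, lam_at_one]
  by_cases p : ((n:ℤ) - k) % 2 = 0
  · rw [if_pos (by omega), if_neg (by omega)]; norm_num
  · rw [if_neg (by omega), if_pos (by omega)]; norm_num


section Positivity
open Polynomial

/-- The `j`-th row polynomial of the symmetric power of a two by two matrix. -/
def rowP {R : Type*} [CommRing R] (n : ℕ) (a b c d : R) (j : ℕ) : R[X] :=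
  (C a * X + C b) ^ j * (C c * X + C d) ^ (n - j)

/-- shifted trace of the symmetric power -/
def trW {R : Type*} [CommRing R] (a b c d : R) (m n : ℕ) : R :=
  ∑ j ∈ Finset.range (n + 1), (rowP n a b c d j).coeff (j + m)

theorem coeff_lin_mul {R : Type*} [CommRing R] (a b : R) (p : R[X]) (i : ℕ) :
    ((C a * X + C b) * p).coeff (i + 1) = a * p.coeff i + b * p.coeff (i + 1) := by
  rw [add_mul, mul_assoc, coeff_add, coeff_C_mul, coeff_X_mul, coeff_C_mul]

theorem natDegree_lin_pow_le {R : Type*} [CommRing R] (a b : R) (n : ℕ) :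
    ((C a * X + C b) ^ n).natDegree ≤ n := by
  have h := natDegree_pow_le_of_le (p := C a * X + C b) n (natDegree_linear_le)
  simpa using h

theorem natDegree_rowP_le {R : Type*} [CommRing R] (n : ℕ) (a b c d : R) (j : ℕ) (hj : j ≤ n) :
    (rowP n a b c d j).natDegree ≤ n := by
  have := natDegree_mul_le_of_le (natDegree_lin_pow_le a b j) (natDegree_lin_pow_le c d (n - j))
  unfold rowP; omega

theorem trW_succ {R : Type*} [CommRing R] (a b c d : R) (n : ℕ) :
    trW a b c d 0 (n + 1) = d ^ (n + 1) + a * trW a b c d 0 n + b * trW a b c d 1 n := by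
  unfold trW
  rw [Finset.sum_range_succ', Finset.mul_sum, Finset.mul_sum, add_assoc, ← Finset.sum_add_distrib,
    add_comm]
  congr 1
  · simp [rowP, coeff_zero_eq_eval_zero]
  · apply Finset.sum_congr rfl
    intro j hj
    rw [← coeff_lin_mul]
    congr 1
    unfold rowP
    rw [show n + 1 - (j + 1) = n - j by omega, pow_succ]; ring

theorem trW_succ_one {R : Type*} [CommRing R] (a b c d : R) (n : ℕ) :
    trW a b c d 1 (n + 1) = c * trW a b c d 0 n + d * trW a b c d 1 n := by
  unfold trW
  rw [Finset.sum_range_succ, Finset.mul_sum, Finset.mul_sum, ← Finset.sum_add_distrib]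
  rw [coeff_eq_zero_of_natDegree_lt (p := rowP (n+1) a b c d (n+1)), add_zero]
  · apply Finset.sum_congr rfl
    intro j hj
    have hj := Finset.mem_range.1 hj
    rw [← coeff_lin_mul]
    congr 1
    unfold rowP
    rw [show n + 1 - j = (n - j) + 1 by omega, pow_succ]; ring
  · have := natDegree_rowP_le (n+1) a b c d (n+1) le_rfl
    omega

theorem trW_rec {R : Type*} [CommRing R] (a b c d : R) (n : ℕ) :
    trW a b c d 0 (n + 2) = (a + d) * trW a b c d 0 (n + 1)
      - (a * d - b * c) * trW a b c d 0 n := by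
  have h1 := trW_succ a b c d (n + 1)
  have h2 := trW_succ a b c d n
  have h3 := trW_succ_one a b c d n
  rw [h1, h3]
  linear_combination (-d) * h2

/-- homogenization -/
def homg {R : Type*} [CommRing R] (n : ℕ) (P N1 N2 : R[X]) : R[X] :=
  ∑ i ∈ Finset.range (n + 1), C (P.coeff i) * N1 ^ i * N2 ^ (n - i)

theorem homg_mul {R : Type*} [CommRing R] (n : ℕ) (a b : R) (P N1 N2 : R[X])
    (hP : P.natDegree ≤ n) :
    homg (n + 1) ((C a * X + C b) * P) N1 N2 = (C a * N1 + C b * N2) * homg n P N1 N2 := by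
  unfold homg
  rw [Finset.sum_range_succ']
  simp only [coeff_lin_mul]
  have h1 : ((C a * X + C b) * P).coeff 0 = b * P.coeff 0 := by simp
  rw [h1, add_mul, Finset.mul_sum, Finset.mul_sum]
  have h2 : ∑ i ∈ Finset.range (n + 1), C b * N2 * (C (P.coeff i) * N1 ^ i * N2 ^ (n - i))
      = ∑ i ∈ Finset.range (n + 1), C (b * P.coeff (i+1)) * N1 ^ (i + 1) * N2 ^ (n + 1 - (i + 1))
        + C (b * P.coeff 0) * N1 ^ 0 * N2 ^ (n + 1 - 0) := by
    have h3 := Finset.sum_range_succ' (fun i => C (b * P.coeff i) * N1 ^ i * N2 ^ (n + 1 - i)) (n+1)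
    rw [← h3, Finset.sum_range_succ _ (n + 1), coeff_eq_zero_of_natDegree_lt (p := P) (n := n + 1) (by omega)]
    simp only [mul_zero, C_0, zero_mul, add_zero]
    apply Finset.sum_congr rfl
    intro j hj
    have hj := Finset.mem_range.1 hj
    rw [show n + 1 - j = (n - j) + 1 by omega, pow_succ, C_mul]; ring
  rw [h2, ← add_assoc, ← Finset.sum_add_distrib]
  congr 1
  apply Finset.sum_congr rfl
  intro j hj
  rw [show n + 1 - (j + 1) = n - j by omega, C_add, C_mul, C_mul]; ring

theorem homg_pow {R : Type*} [CommRing R] (a b c d : R) (N1 N2 : R[X]) (l : ℕ) : ∀ j : ℕ,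
    homg (j + l) ((C a * X + C b) ^ j * (C c * X + C d) ^ l) N1 N2
      = (C a * N1 + C b * N2) ^ j * (C c * N1 + C d * N2) ^ l := by
  have h0 : homg l ((C c * X + C d) ^ l) N1 N2 = (C c * N1 + C d * N2) ^ l := by
    induction l with
    | zero => simp [homg]
    | succ l ih => rw [pow_succ', homg_mul _ _ _ _ _ _ (natDegree_lin_pow_le c d l), ih, pow_succ']
  intro j
  induction j with
  | zero => simp [h0]
  | succ j ih =>
    rw [pow_succ', mul_assoc, show j + 1 + l = (j + l) + 1 by ring, homg_mul, ih]
    · rw [pow_succ']; ring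
    · have := natDegree_mul_le_of_le (natDegree_lin_pow_le a b j) (natDegree_lin_pow_le c d l)
      omega

theorem rowP_mul {R : Type*} [CommRing R] (n : ℕ) (a b c d a' b' c' d' : R) (j : ℕ) (hj : j ≤ n) :
    rowP n (a * a' + b * c') (a * b' + b * d') (c * a' + d * c') (c * b' + d * d') j
      = ∑ i ∈ Finset.range (n + 1), C ((rowP n a b c d j).coeff i) * rowP n a' b' c' d' i := by
  have h := homg_pow a b c d (C a' * X + C b') (C c' * X + C d') (n - j) j
  rw [show j + (n - j) = n by omega] at h
  unfold homg at h
  simp only [mul_assoc (C (coeff _ _))] at h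
  unfold rowP
  rw [h]
  simp only [C_add, C_mul]
  congr 2 <;> ring

theorem rowP_transpose (n : ℕ) (a b c d : ℝ) (i j : ℕ) (hi : i ≤ n) (hj : j ≤ n) :
    (n.choose i : ℝ) * (rowP n a b c d i).coeff j = n.choose j * (rowP n a c b d j).coeff i := by
  have h1 : (X * C (C a * X + C b) + C (C c * X + C d) : ℝ[X][X]) ^ n
      = ∑ m ∈ Finset.range (n + 1), C ((n.choose m : ℝ[X]) * rowP n a b c d m) * X ^ m := by
    rw [add_pow]
    apply Finset.sum_congr rfl
    intro m hm
    simp only [rowP, C_mul, C_pow, mul_pow, map_natCast]; ring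
  have h2 : (X * C (C a * X + C b) + C (C c * X + C d) : ℝ[X][X]) ^ n
      = ∑ m ∈ Finset.range (n + 1), C ((n.choose m : ℝ[X]) * X ^ m) * (rowP n a c b d m).map C := by
    have : (X * C (C a * X + C b) + C (C c * X + C d) : ℝ[X][X])
      = C X * (C (C a) * X + C (C c)) + (C (C b) * X + C (C d)) := by
      simp only [C_add, C_mul]; ring
    rw [this, add_pow]
    apply Finset.sum_congr rfl
    intro m hm
    simp only [rowP, C_mul, C_pow, mul_pow, map_natCast, Polynomial.map_mul, Polynomial.map_pow,
      Polynomial.map_add, map_C, map_X]; ring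
  have h3 : ((X * C (C a * X + C b) + C (C c * X + C d) : ℝ[X][X]) ^ n).coeff i
      = (n.choose i : ℝ[X]) * rowP n a b c d i := by
    rw [h1, finsetSum_coeff]
    simp only [coeff_C_mul_X_pow]
    rw [Finset.sum_ite_eq, if_pos (Finset.mem_range.2 (by omega))]
  have h4 := congrArg (fun p => (p.coeff i).coeff j) h2
  rw [h3, finsetSum_coeff, finsetSum_coeff, ← C_eq_natCast, coeff_C_mul] at h4
  rw [h4]
  rw [Finset.sum_eq_single j]
  · rw [coeff_C_mul, coeff_map, ← C_eq_natCast, mul_assoc, coeff_C_mul, mul_comm (X ^ j), coeff_C_mul]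
    simp
  · intro m _ hm
    rw [coeff_C_mul, coeff_map, ← C_eq_natCast, mul_assoc, coeff_C_mul, mul_comm (X ^ m), coeff_C_mul,
      coeff_X_pow, if_neg (Ne.symm hm)]
    simp
  · intro h; exact absurd (Finset.mem_range.2 (by omega)) h


theorem laurent_coef (x : ℝ) (m k : ℤ) :
    (LaurentPolynomial.C x * LaurentPolynomial.T m : LaurentPolynomial ℝ).coeff k
      = if m = k then x else 0 := by
  rw [← LaurentPolynomial.single_eq_C_mul_T]
  rw [AddMonoidAlgebra.coeff_single, Finsupp.single_apply]

theorem laurent_coef_mul (x : ℝ) (m k : ℤ) (p : LaurentPolynomial ℝ) :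
    (LaurentPolynomial.C x * LaurentPolynomial.T m * p).coeff k = x * p.coeff (k - m) := by
  rw [← LaurentPolynomial.single_eq_C_mul_T]
  apply AddMonoidAlgebra.coeff_single_mul_eq_mul_coeff
  intro m' _
  constructor <;> intro h <;> omega

theorem laurent_rec_coef (y : ℝ) (L : ℕ → LaurentPolynomial ℝ)
    (h0 : L 0 = 1)
    (h1 : L 1 = LaurentPolynomial.C (2 * (1 - y)) * LaurentPolynomial.T 0
      + LaurentPolynomial.C y * LaurentPolynomial.T 1
      + LaurentPolynomial.C y * LaurentPolynomial.T (-1))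
    (h2 : ∀ n, L (n + 2) = (LaurentPolynomial.C (2 * (1 - y)) * LaurentPolynomial.T 0
      + LaurentPolynomial.C y * LaurentPolynomial.T 1
      + LaurentPolynomial.C y * LaurentPolynomial.T (-1)) * L (n + 1) - L n) (n : ℕ) :
    ∀ k : ℤ, (L n).coeff k = lam n k y := by
  induction n using Nat.twoStepInduction with
  | zero =>
    intro k
    have := laurent_coef 1 0 k
    rw [LaurentPolynomial.T_zero, map_one, one_mul] at this
    rw [h0, this]
    simp only [lam, eq_comm]
  | one =>
    intro k
    rw [h1, AddMonoidAlgebra.coeff_add, AddMonoidAlgebra.coeff_add, Finsupp.add_apply,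
      Finsupp.add_apply, laurent_coef, laurent_coef, laurent_coef]
    simp only [lam]
    split_ifs <;> first | omega | simp
  | more n ih1 ih2 =>
    intro k
    rw [h2, sub_eq_add_neg, AddMonoidAlgebra.coeff_add, Finsupp.add_apply, add_mul, add_mul,
      AddMonoidAlgebra.coeff_add, AddMonoidAlgebra.coeff_add, Finsupp.add_apply,
      Finsupp.add_apply, laurent_coef_mul, laurent_coef_mul, laurent_coef_mul,
      AddMonoidAlgebra.coeff_neg, Finsupp.neg_apply, ih1, ih2, ih2, ih2]
    simp only [lam]
    rw [show k - 0 = k by ring, show k - -1 = k + 1 by ring]; ring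

theorem rowP_twist (n : ℕ) (a b : ℝ) (i j : ℕ) (hj : j ≤ n) :
    (rowP n (LaurentPolynomial.C a) (LaurentPolynomial.C b * LaurentPolynomial.T 1)
      (LaurentPolynomial.C (-b) * LaurentPolynomial.T (-1)) (LaurentPolynomial.C a) j).coeff i
      = LaurentPolynomial.C ((rowP n a b (-b) a j).coeff i) * LaurentPolynomial.T ((j : ℤ) - i) := by
  have h : rowP n (LaurentPolynomial.C a) (LaurentPolynomial.C b * LaurentPolynomial.T 1)
      (LaurentPolynomial.C (-b) * LaurentPolynomial.T (-1)) (LaurentPolynomial.C a) j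
      = C (LaurentPolynomial.T (j : ℤ)) * ((rowP n a b (-b) a j).map LaurentPolynomial.C).comp
        (C (LaurentPolynomial.T (-1)) * X) := by
    have e1 : (C (LaurentPolynomial.C a) * X + C (LaurentPolynomial.C b * LaurentPolynomial.T 1) :
        (LaurentPolynomial ℝ)[X]) = C (LaurentPolynomial.T 1) *
        (C (LaurentPolynomial.C a) * (C (LaurentPolynomial.T (-1)) * X) + C (LaurentPolynomial.C b)) := by
      have : (C (LaurentPolynomial.T 1) * C (LaurentPolynomial.T (-1)) : (LaurentPolynomial ℝ)[X]) = 1 := by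
        rw [← C_mul, ← LaurentPolynomial.T_add]; simp
      rw [C_mul]
      linear_combination (-C (LaurentPolynomial.C a) * X) * this
    unfold rowP
    rw [e1]
    simp only [Polynomial.map_mul, Polynomial.map_pow, Polynomial.map_add, map_C, map_X,
      mul_comp, pow_comp, add_comp, C_comp, X_comp, mul_pow, C_mul]
    rw [← C_pow, LaurentPolynomial.T_pow]
    simp only [mul_one]; ring
  rw [h, coeff_C_mul, comp_C_mul_X_coeff, coeff_map, LaurentPolynomial.T_pow,
    mul_left_comm, ← LaurentPolynomial.T_add]
  congr 2
  ring

theorem lam_nonneg (n : ℕ) (k : ℤ) (y : ℝ) (hy0 : 0 ≤ y) (hy1 : y ≤ 1) : 0 ≤ lam n k y := by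
  obtain ⟨a, ha⟩ : ∃ a : ℝ, a * a = 1 - y := ⟨Real.sqrt (1 - y), Real.mul_self_sqrt (by linarith)⟩
  obtain ⟨b, hb⟩ : ∃ b : ℝ, b * b = y := ⟨Real.sqrt y, Real.mul_self_sqrt hy0⟩
  set α : LaurentPolynomial ℝ := LaurentPolynomial.C a with hα
  set β : LaurentPolynomial ℝ := LaurentPolynomial.C b with hβ
  set q : LaurentPolynomial ℝ := LaurentPolynomial.T 1 with hq
  set q' : LaurentPolynomial ℝ := LaurentPolynomial.T (-1) with hq'
  have hqq : q * q' = 1 := by rw [hq, hq', ← LaurentPolynomial.T_add]; simp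
  have hβn : LaurentPolynomial.C (-b) = -β := by rw [map_neg]
  have hone : α * α + β * β = 1 := by
    rw [hα, hβ, ← map_mul, ← map_mul, ← map_add, ha, hb]; simp
  have hββ : LaurentPolynomial.C y = β * β := by rw [hβ, ← map_mul, hb]
  have hαα : LaurentPolynomial.C (2 * (1 - y)) = 2 * (α * α) := by
    rw [← ha, map_mul, map_mul, hα]; rw [map_ofNat (LaurentPolynomial.C (R := ℝ)) 2]
  set m11 := α * α + (β * q) * β
  set m12 := α * (-β) + (β * q) * α
  set m21 := (-β * q') * α + α * β
  set m22 := (-β * q') * (-β) + α * α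
  have htr : m11 + m22 = LaurentPolynomial.C (2 * (1 - y)) * LaurentPolynomial.T 0
      + LaurentPolynomial.C y * q + LaurentPolynomial.C y * q' := by
    rw [hαα, hββ, LaurentPolynomial.T_zero]; simp only [m11, m22]; ring
  have hdet : m11 * m22 - m12 * m21 = 1 := by
    simp only [m11, m22, m12, m21]
    linear_combination (α * α + β * β) * β * β * hqq + (α * α + β * β + 1) * hone
  have key := laurent_rec_coef y (trW m11 m12 m21 m22 0) (by simp [trW, rowP])
    (by
      rw [← htr]
      simp [trW, rowP, Finset.sum_range_succ]; ring)
    (by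
      intro n
      rw [← htr, trW_rec, hdet, one_mul]) n k
  rw [← key]
  unfold trW
  rw [AddMonoidAlgebra.coeff_sum, Finsupp.finsetSum_apply]
  apply Finset.sum_nonneg
  intro j hj
  have hj := Nat.lt_succ_iff.1 (Finset.mem_range.1 hj)
  rw [rowP_mul n α (β * q) (-β * q') α α (-β) β α j hj, finsetSum_coeff,
    AddMonoidAlgebra.coeff_sum, Finsupp.finsetSum_apply]
  apply Finset.sum_nonneg
  intro i hi
  have hi := Nat.lt_succ_iff.1 (Finset.mem_range.1 hi)
  have hB : (rowP n α (-β) β α i).coeff (j + 0) = LaurentPolynomial.C ((rowP n a (-b) b a i).coeff j) := by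
    rw [← coeff_map (LaurentPolynomial.C (R := ℝ))]
    simp only [rowP, Polynomial.map_mul, Polynomial.map_pow, Polynomial.map_add, map_C, map_X, add_zero,
      hα, hβ, map_neg, Polynomial.map_neg]
  rw [coeff_C_mul, hB, ← hβn, rowP_twist n a b i j hj, mul_right_comm, ← map_mul, laurent_coef]
  split_ifs
  · have ht := rowP_transpose n a (-b) b a i j hi hj
    have hc1 : (0 : ℝ) < n.choose i := by exact_mod_cast Nat.choose_pos hi
    have hc2 : (0 : ℝ) < n.choose j := by exact_mod_cast Nat.choose_pos hj
    have : (rowP n a (-b) b a i).coeff j = n.choose j / n.choose i * (rowP n a b (-b) a j).coeff i := by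
      field_simp; linarith
    rw [this]
    have : (rowP n a b (-b) a j).coeff i * (n.choose j / n.choose i * (rowP n a b (-b) a j).coeff i)
      = n.choose j / n.choose i * ((rowP n a b (-b) a j).coeff i) ^ 2 := by ring
    rw [this]; positivity
  · exact le_rfl
end Positivity


theorem lam_continuous (n : ℕ) (k : ℤ) : Continuous (lam n k) :=
  continuous_iff_continuousAt.2 fun y => (lam_hasDerivAt n k y).continuousAt

theorem dlam_continuous (n : ℕ) : ∀ k : ℤ, Continuous (dlam n k) := by
  induction n using Nat.twoStepInduction with
  | zero => intro k; exact continuous_const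
  | one => intro k; exact continuous_const
  | more n ih1 ih2 =>
    intro k
    have h1 := ih1 k
    have h2 := ih2 k
    have h3 := ih2 (k + 1)
    have h4 := ih2 (k - 1)
    have h5 := lam_continuous (n + 1) k
    have h6 := lam_continuous (n + 1) (k + 1)
    have h7 := lam_continuous (n + 1) (k - 1)
    have : dlam (n + 2) k = fun y => 2 * (1 - y) * dlam (n + 1) k y
      + y * (dlam (n + 1) (k + 1) y + dlam (n + 1) (k - 1) y) - dlam n k y
      - 2 * lam (n + 1) k y + (lam (n + 1) (k + 1) y + lam (n + 1) (k - 1) y) := by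
      funext y; simp [dlam]
    rw [this]
    fun_prop

theorem lam_bounds (n : ℕ) (k : ℤ) : ∃ C : ℝ, 0 ≤ C ∧ (∀ y ∈ Icc (0:ℝ) 1, |lam n k y| ≤ C) ∧
    ∀ y ∈ Icc (0:ℝ) 1, |dlam n k y| ≤ C := by
  obtain ⟨C1, h1⟩ := (isCompact_Icc (a := (0:ℝ)) (b := 1)).exists_bound_of_continuousOn
    (lam_continuous n k).continuousOn
  obtain ⟨C2, h2⟩ := (isCompact_Icc (a := (0:ℝ)) (b := 1)).exists_bound_of_continuousOn
    (dlam_continuous n k).continuousOn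
  refine ⟨max (max C1 C2) 0, le_max_right _ _, fun y hy => ?_, fun y hy => ?_⟩
  · exact (h1 y hy).trans ((le_max_left _ _).trans (le_max_left _ _))
  · exact (h2 y hy).trans ((le_max_right _ _).trans (le_max_left _ _))

/-- The de Branges weights. -/
def tau (n k : ℕ) (t : ℝ) : ℝ :=
  ∑ j ∈ Finset.Ico k (n + 1), (lam n j (Real.exp (-t)) + lam n (j + 1) (Real.exp (-t)))

/-- The function `λ_k` in the time variable. -/
def lamt (n k : ℕ) (t : ℝ) : ℝ := lam n k (Real.exp (-t))

theorem exp_mem (t : ℝ) (ht : 0 ≤ t) : Real.exp (-t) ∈ Icc (0:ℝ) 1 :=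
  ⟨(Real.exp_pos _).le, Real.exp_le_one_iff.2 (by linarith)⟩

theorem lamt_nonneg (n k : ℕ) (t : ℝ) (ht : 0 ≤ t) : 0 ≤ lamt n k t :=
  lam_nonneg n k _ (exp_mem t ht).1 (exp_mem t ht).2

theorem tau_nonneg (n k : ℕ) (t : ℝ) (ht : 0 ≤ t) : 0 ≤ tau n k t := by
  apply Finset.sum_nonneg
  intro j _
  exact add_nonneg (lam_nonneg n j _ (exp_mem t ht).1 (exp_mem t ht).2)
    (lam_nonneg n (j + 1) _ (exp_mem t ht).1 (exp_mem t ht).2)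

theorem tau_zero (n k : ℕ) (hk : k ≤ n + 1) : tau n k 0 = n + 1 - k := by
  unfold tau
  rw [neg_zero, Real.exp_zero]
  rw [Finset.sum_congr rfl (g := fun _ => (1:ℝ))]
  · simp; rw [Nat.cast_sub hk]; push_cast; ring
  · intro j hj
    have := (Finset.mem_Ico.1 hj).2
    exact lam_at_one_add n j (by omega)

theorem tau_top (n : ℕ) (t : ℝ) : tau n (n + 1) t = 0 := by simp [tau]

theorem lamt_top (n : ℕ) (t : ℝ) : lamt n (n + 1) t = 0 :=
  lam_zero_of_lt n _ _ (by push_cast; omega)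

theorem tau_sub (n k : ℕ) (hk : k ≤ n) (t : ℝ) :
    tau n k t - tau n (k + 1) t = lamt n k t + lamt n (k + 1) t := by
  unfold tau lamt
  rw [Finset.sum_eq_sum_Ico_succ_bot (by omega : k < n + 1)]
  push_cast; ring

theorem tau_hasDerivAt (n k : ℕ) (hk : k ≤ n + 1) (t : ℝ) :
    HasDerivAt (tau n k) (-(k * lamt n k t)) t := by
  have hexp : HasDerivAt (fun t => Real.exp (-t)) (-Real.exp (-t)) t := by
    have := (hasDerivAt_neg t).exp
    exact this.congr_deriv (by ring)
  have h1 : HasDerivAt (tau n k) (∑ j ∈ Finset.Ico k (n + 1),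
      (dlam n j (Real.exp (-t)) * (-Real.exp (-t))
        + dlam n (j + 1) (Real.exp (-t)) * (-Real.exp (-t)))) t := by
    have : tau n k = fun t => ∑ j ∈ Finset.Ico k (n + 1),
        (lam n j (Real.exp (-t)) + lam n (j + 1) (Real.exp (-t))) := rfl
    rw [this]
    apply HasDerivAt.fun_sum
    intro j _
    exact ((lam_hasDerivAt n j _).comp t hexp).add ((lam_hasDerivAt n (j + 1) _).comp t hexp)
  refine h1.congr_deriv ?_
  have h2 : ∀ j ∈ Finset.Ico k (n + 1), (dlam n j (Real.exp (-t)) * (-Real.exp (-t))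
        + dlam n (j + 1) (Real.exp (-t)) * (-Real.exp (-t)))
        = ((j + 1 : ℕ) : ℝ) * lamt n (j + 1) t - (j : ℝ) * lamt n j t := by
    intro j _
    have := lam_ode n j (Real.exp (-t))
    unfold lamt; push_cast at this ⊢
    linarith
  rw [Finset.sum_congr rfl h2, Finset.sum_Ico_sub (fun j => (j : ℝ) * lamt n j t) hk, lamt_top]
  ring

theorem exp_neg_lip (a b : ℝ) (ha : 0 ≤ a) (hab : a ≤ b) :
    |Real.exp (-a) - Real.exp (-b)| ≤ b - a := by
  have h1 : Real.exp (-b) ≤ Real.exp (-a) := Real.exp_le_exp.2 (by linarith)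
  rw [abs_of_nonneg (by linarith)]
  have h2 : Real.exp (-b) = Real.exp (-a) * Real.exp (-(b - a)) := by
    rw [← Real.exp_add]; ring_nf
  have h3 := Real.add_one_le_exp (-(b - a))
  have h4 : Real.exp (-a) ≤ 1 := Real.exp_le_one_iff.2 (by linarith)
  have h5 := Real.exp_pos (-a)
  rw [h2]
  nlinarith

theorem tau_taylor (n k : ℕ) (hk : k ≤ n + 1) : ∃ C : ℝ, 0 ≤ C ∧ ∀ t h : ℝ, 0 ≤ t → 0 ≤ h →
    |tau n k t - tau n k (t + h) - h * (k * lamt n k (t + h))| ≤ C * h ^ 2 := by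
  obtain ⟨C, hC0, _, hC⟩ := lam_bounds n k
  refine ⟨k * C, by positivity, fun t h ht hh => ?_⟩
  rcases hh.eq_or_lt with rfl | hh
  · simp
  have hlt : t < t + h := by linarith
  obtain ⟨s, hs, hse⟩ := exists_hasDerivAt_eq_slope (tau n k) (fun t => -(k * lamt n k t)) hlt
    (fun x _ => (tau_hasDerivAt n k hk x).continuousAt.continuousWithinAt)
    (fun x _ => tau_hasDerivAt n k hk x)
  have e1 : tau n k t - tau n k (t + h) = h * (k * lamt n k s) := by
    rw [show t + h - t = h by ring, eq_div_iff hh.ne'] at hse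
    linarith
  have hlip : |lamt n k s - lamt n k (t + h)| ≤ C * h := by
    have := (convex_Icc (0:ℝ) 1).norm_image_sub_le_of_norm_hasDerivWithin_le
      (f := lam n k) (f' := dlam n k) (C := C)
      (fun x _ => (lam_hasDerivAt n k x).hasDerivWithinAt) (fun x hx => hC x hx)
      (exp_mem (t + h) (by linarith)) (exp_mem s (by linarith [hs.1]))
    have h2 := exp_neg_lip s (t + h) (by linarith [hs.1]) hs.2.le
    unfold lamt
    rw [Real.norm_eq_abs, Real.norm_eq_abs] at this
    refine this.trans ?_
    apply mul_le_mul_of_nonneg_left _ hC0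
    linarith [hs.1]
  rw [e1, ← mul_sub, ← mul_sub, abs_mul, abs_mul, abs_of_pos hh, abs_of_nonneg (by positivity : (0:ℝ) ≤ k)]
  calc h * (k * |lamt n k s - lamt n k (t + h)|) ≤ h * (k * (C * h)) := by gcongr
    _ = k * C * h ^ 2 := by ring

theorem lamt_bound (n k : ℕ) : ∃ C : ℝ, 0 ≤ C ∧ ∀ t, 0 ≤ t → |lamt n k t| ≤ C := by
  obtain ⟨C, hC0, hC, _⟩ := lam_bounds n k
  exact ⟨C, hC0, fun t ht => hC _ (exp_mem t ht)⟩

theorem tau_bound (n k : ℕ) (hk : k ≤ n + 1) : ∃ C : ℝ, 0 ≤ C ∧ ∀ t, 0 ≤ t → |tau n k t| ≤ C := by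
  refine ⟨|tau n k 0|, abs_nonneg _, fun t ht => ?_⟩
  rw [abs_of_nonneg (tau_nonneg n k t ht), abs_of_nonneg (tau_nonneg n k 0 le_rfl)]
  have : AntitoneOn (tau n k) (Ici 0) := by
    apply antitoneOn_of_hasDerivWithinAt_nonpos (convex_Ici 0)
      (fun x _ => (tau_hasDerivAt n k hk x).continuousAt.continuousWithinAt)
      (fun x _ => (tau_hasDerivAt n k hk x).hasDerivWithinAt)
    intro x hx
    rw [interior_Ici] at hx
    have := lamt_nonneg n k x (le_of_lt hx)
    have : 0 ≤ (k:ℝ) * lamt n k x := by positivity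
    linarith
  exact this (mem_Ici.2 le_rfl) (mem_Ici.2 ht) ht


theorem lm_S_step (x : ℕ → ℝ) (n : ℕ) :
    (∑ k ∈ Finset.range (n + 1), ((n : ℝ) + 1 - k) * ((k + 1) * x k - 1 / (k + 1))) / (n + 2)
      = (∑ k ∈ Finset.range n, ((n : ℝ) - k) * ((k + 1) * x k - 1 / (k + 1))) / (n + 1)
        + ((∑ k ∈ Finset.range (n + 1), ((k : ℝ) + 1) ^ 2 * x k) - (n + 1)) / ((n + 1) * (n + 2)) := by
  have h1 : (∑ k ∈ Finset.range n, ((n : ℝ) - k) * ((k + 1) * x k - 1 / (k + 1)))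
    = ∑ k ∈ Finset.range (n + 1), ((n : ℝ) - k) * ((k + 1) * x k - 1 / (k + 1)) := by
    rw [Finset.sum_range_succ]; simp
  have h2 : (∑ k ∈ Finset.range (n + 1), ((k : ℝ) + 1) ^ 2 * x k) - ((n:ℝ) + 1)
    = ∑ k ∈ Finset.range (n + 1), (((k : ℝ) + 1) ^ 2 * x k - 1) := by
    rw [Finset.sum_sub_distrib]; simp
  rw [h1, h2, Finset.sum_div, Finset.sum_div, Finset.sum_div, ← Finset.sum_add_distrib]
  apply Finset.sum_congr rfl
  intro k _
  have : (n : ℝ) + 1 ≠ 0 := by positivity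
  have : (n : ℝ) + 2 ≠ 0 := by positivity
  have : (k : ℝ) + 1 ≠ 0 := by positivity
  field_simp
  ring

theorem lebedev_milin (α β : ℕ → ℂ) (h0 : β 0 = 1)
    (hrec : ∀ k : ℕ, ((k : ℂ) + 1) * β (k + 1)
      = ∑ j ∈ Finset.range (k + 1), ((j : ℂ) + 1) * α j * β (k - j)) (n : ℕ) :
    ∑ k ∈ Finset.range (n + 1), ‖β k‖ ^ 2 ≤ (n + 1) * Real.exp
      ((∑ k ∈ Finset.range n, ((n : ℝ) - k) * ((k + 1) * ‖α k‖ ^ 2 - 1 / (k + 1))) / (n + 1)) := by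
  induction n with
  | zero => simp [h0]
  | succ n ih =>
    set B := ∑ k ∈ Finset.range (n + 1), ‖β k‖ ^ 2 with hB
    set A := ∑ k ∈ Finset.range (n + 1), ((k : ℝ) + 1) ^ 2 * ‖α k‖ ^ 2 with hA
    have hB0 : 0 ≤ B := Finset.sum_nonneg fun _ _ => by positivity
    have hA0 : 0 ≤ A := Finset.sum_nonneg fun _ _ => by positivity
    have hcs : (((n : ℝ) + 1) * ‖β (n + 1)‖) ^ 2 ≤ A * B := by
      have e1 : ((n : ℝ) + 1) * ‖β (n + 1)‖ ≤
          ∑ j ∈ Finset.range (n + 1), (((j : ℝ) + 1) * ‖α j‖) * ‖β (n - j)‖ := by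
        have : ‖((n : ℂ) + 1) * β (n + 1)‖ = ((n : ℝ) + 1) * ‖β (n + 1)‖ := by
          rw [norm_mul]; congr 1; exact_mod_cast Complex.norm_natCast (n + 1)
        rw [← this, hrec]
        refine (norm_sum_le _ _).trans (Finset.sum_le_sum fun j _ => ?_)
        rw [norm_mul, norm_mul]
        have : ‖(j : ℂ) + 1‖ = (j : ℝ) + 1 := by exact_mod_cast Complex.norm_natCast (j + 1)
        rw [this]
      have e2 := Finset.sum_mul_sq_le_sq_mul_sq (Finset.range (n + 1))
        (fun j => ((j : ℝ) + 1) * ‖α j‖) (fun j => ‖β (n - j)‖)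
      have e3 : ∑ j ∈ Finset.range (n + 1), ‖β (n - j)‖ ^ 2 = B := by
        have := Finset.sum_range_reflect (fun k => ‖β k‖ ^ 2) (n + 1)
        rw [hB, ← this]
        apply Finset.sum_congr rfl
        intro j _
        rw [show n + 1 - 1 - j = n - j by omega]
      simp only [mul_pow] at e2
      rw [e3] at e2
      calc (((n : ℝ) + 1) * ‖β (n + 1)‖) ^ 2 ≤ _ := pow_le_pow_left₀ (by positivity) e1 2
        _ ≤ _ := e2
    rw [Finset.sum_range_succ, ← hB]
    have hS := lm_S_step (fun k => ‖α k‖ ^ 2) n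
    push_cast
    rw [show (n : ℝ) + 1 + 1 = n + 2 by ring, hS, Real.exp_add]
    rw [← hA]
    set S := (∑ k ∈ Finset.range n, ((n : ℝ) - k) * ((k + 1) * ‖α k‖ ^ 2 - 1 / (k + 1))) / ((n:ℝ) + 1)
    have e4 := Real.add_one_le_exp ((A - (n + 1)) / (((n : ℝ) + 1) * (n + 2)))
    have e5 : B + ‖β (n + 1)‖ ^ 2 ≤ B * (1 + A / (n + 1) ^ 2) := by
      have : ‖β (n + 1)‖ ^ 2 ≤ A * B / (n + 1) ^ 2 := by
        rw [le_div_iff₀ (by positivity)]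
        rw [mul_pow] at hcs; linarith
      calc _ ≤ B + A * B / (n + 1) ^ 2 := by linarith
        _ = _ := by ring
    have e6 : 1 + A / ((n : ℝ) + 1) ^ 2 = (n + 2) / (n + 1) *
        ((A - (n + 1)) / (((n : ℝ) + 1) * (n + 2)) + 1) := by
      field_simp; ring
    calc B + ‖β (n + 1)‖ ^ 2 ≤ B * (1 + A / (n + 1) ^ 2) := e5
      _ ≤ ((n + 1) * Real.exp S) * (1 + A / (n + 1) ^ 2) := by gcongr
      _ = ((n + 2) * Real.exp S) * ((A - (n + 1)) / (((n : ℝ) + 1) * (n + 2)) + 1) := by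
        rw [e6]; field_simp
      _ ≤ ((n + 2) * Real.exp S) * Real.exp ((A - (n + 1)) / (((n : ℝ) + 1) * (n + 2))) := by gcongr
      _ = _ := by ring


section StepAlgebra
open ComplexConjugate

theorem abel_step (T L g : ℕ → ℝ) (n : ℕ) (hg : g 0 = 0)
    (hT : ∀ k ≤ n, T k - T (k + 1) = L k + L (k + 1)) :
    ∀ N ≤ n, ∑ i ∈ Finset.range N, T (i + 1) * (g (i + 1) - g i)
      = ∑ i ∈ Finset.range N, L (i + 1) * (g (i + 1) + g i) + (T N - L N) * g N := by
  intro N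
  induction N with
  | zero => intro _; simp [hg]
  | succ N ih =>
    intro hN
    rw [Finset.sum_range_succ, Finset.sum_range_succ, ih (by omega)]
    linear_combination g N * hT N (by omega)

theorem deBranges_ineq (n : ℕ) (T L : ℕ → ℝ) (hL : ∀ k, 0 ≤ L k)
    (hT : ∀ k ≤ n, T k - T (k + 1) = L k + L (k + 1)) (hT0 : T (n + 1) = 0) (hL0 : L (n + 1) = 0)
    (p ρ : ℕ → ℂ) (κ : ℂ) (hκ : ‖κ‖ = 1) (hρ0 : ρ 0 = 1) (hρ : ∀ m, ρ (m + 1) = 2 * κ ^ (m + 1)) :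
    ∑ i ∈ Finset.range n, (((i : ℝ) + 1) * L (i + 1)) * (((i : ℝ) + 1) * ‖p (i + 1)‖ ^ 2 - 4 / (i + 1))
    + 2 * ∑ i ∈ Finset.range n, T (i + 1) * (((i : ℝ) + 1) * (conj (p (i + 1)) *
      (ρ (i + 1) - ∑ j ∈ Finset.range (i + 1), ((j : ℂ) + 1) * p (j + 1) * ρ (i - j))).re) ≤ 0 := by
  set b : ℕ → ℂ := fun k => -∑ j ∈ Finset.range k, ((j : ℂ) + 1) * p (j + 1) * conj κ ^ (j + 1) with hb
  have hκ1 : conj κ * κ = 1 := by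
    rw [mul_comm, Complex.mul_conj, Complex.normSq_eq_norm_sq, hκ]; simp
  have hκp : ∀ m, conj κ ^ m * κ ^ m = 1 := fun m => by rw [← mul_pow, hκ1, one_pow]
  have hbs : ∀ i, b (i + 1) - b i = -(((i : ℂ) + 1) * p (i + 1) * conj κ ^ (i + 1)) := by
    intro i; simp only [hb]; rw [Finset.sum_range_succ]; ring
  have he : ∀ i, ρ (i + 1) - ∑ j ∈ Finset.range (i + 1), ((j : ℂ) + 1) * p (j + 1) * ρ (i - j)
      = κ ^ (i + 1) * (2 + b (i + 1) + b i) := by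
    intro i
    have h1 : ∑ j ∈ Finset.range i, ((j : ℂ) + 1) * p (j + 1) * ρ (i - j)
        = -(2 * κ ^ (i + 1) * b i) := by
      simp only [hb]
      rw [mul_neg, neg_neg, Finset.mul_sum]
      apply Finset.sum_congr rfl
      intro j hj
      have hj := Finset.mem_range.1 hj
      obtain ⟨m, rfl⟩ : ∃ m, i = j + 1 + m := ⟨i - (j + 1), by omega⟩
      rw [show j + 1 + m - j = m + 1 by omega, hρ]
      rw [show j + 1 + m + 1 = (j + 1) + (m + 1) by ring, pow_add κ (j + 1)]
      linear_combination (-2 * κ ^ (m + 1) * ((j : ℂ) + 1) * p (j + 1)) * hκp (j + 1)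
    rw [Finset.sum_range_succ, h1, Nat.sub_self, hρ0, hρ]
    have h2 := hbs i
    have h3 : κ ^ (i + 1) * (b (i + 1) - b i) = -(((i : ℂ) + 1) * p (i + 1)) := by
      rw [h2]; linear_combination (-((i : ℂ) + 1) * p (i + 1)) * hκp (i + 1)
    linear_combination -h3
  set g : ℕ → ℝ := fun k => ‖b k‖ ^ 2 + 2 * (b k).re with hg
  have hg0 : g 0 = 0 := by simp [hg, hb]
  have hnorm : ∀ z : ℂ, ‖z‖ ^ 2 = z.re ^ 2 + z.im ^ 2 := by
    intro z; rw [← Complex.normSq_eq_norm_sq, Complex.normSq_apply]; ring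
  have hterm : ∀ i : ℕ, ((i : ℝ) + 1) * (conj (p (i + 1)) *
      (ρ (i + 1) - ∑ j ∈ Finset.range (i + 1), ((j : ℂ) + 1) * p (j + 1) * ρ (i - j))).re
      = -(g (i + 1) - g i) := by
    intro i
    rw [he i]
    have h4 : ((i : ℝ) + 1) * (conj (p (i + 1)) * (κ ^ (i + 1) * (2 + b (i + 1) + b i))).re
        = (-conj (b (i + 1) - b i) * (2 + b (i + 1) + b i)).re := by
      rw [hbs i]
      have : (((i : ℝ) + 1 : ℝ) : ℂ) * (conj (p (i + 1)) * (κ ^ (i + 1) * (2 + b (i + 1) + b i)))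
        = -conj (-(((i : ℂ) + 1) * p (i + 1) * conj κ ^ (i + 1))) * (2 + b (i + 1) + b i) := by
        simp only [map_neg, map_mul, map_add, map_pow, Complex.conj_conj, map_one, map_natCast]
        push_cast; ring
      rw [← this, Complex.re_ofReal_mul]
    rw [h4]
    simp only [hg, hnorm]
    simp [Complex.mul_re]
    ring
  have hA := abel_step T L g n hg0 hT n le_rfl
  have hTn : T n - L n = 0 := by have := hT n le_rfl; rw [hT0, hL0] at this; linarith
  rw [hTn, zero_mul, add_zero] at hA
  have e1 : ∑ i ∈ Finset.range n, T (i + 1) * (((i : ℝ) + 1) * (conj (p (i + 1)) *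
      (ρ (i + 1) - ∑ j ∈ Finset.range (i + 1), ((j : ℂ) + 1) * p (j + 1) * ρ (i - j))).re)
      = -∑ i ∈ Finset.range n, L (i + 1) * (g (i + 1) + g i) := by
    rw [← hA, ← Finset.sum_neg_distrib]
    apply Finset.sum_congr rfl
    intro i _
    rw [hterm]; ring
  rw [e1, mul_neg, ← sub_eq_add_neg, Finset.mul_sum, ← Finset.sum_sub_distrib]
  apply Finset.sum_nonpos
  intro i _
  have h5 : ((i : ℝ) + 1) ^ 2 * ‖p (i + 1)‖ ^ 2 = ‖b (i + 1) - b i‖ ^ 2 := by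
    rw [hbs i, norm_neg, norm_mul, norm_mul, norm_pow, Complex.norm_conj, hκ, one_pow, mul_one, mul_pow]
    congr 2
    exact_mod_cast (Complex.norm_natCast (i + 1)).symm
  have h6 : (((i : ℝ) + 1) * L (i + 1)) * (((i : ℝ) + 1) * ‖p (i + 1)‖ ^ 2 - 4 / (i + 1))
      - 2 * (L (i + 1) * (g (i + 1) + g i)) = -(L (i + 1) * ‖b (i + 1) + b i + 2‖ ^ 2) := by
    have : (((i : ℝ) + 1) * L (i + 1)) * (((i : ℝ) + 1) * ‖p (i + 1)‖ ^ 2 - 4 / (i + 1))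
      = L (i + 1) * (((i : ℝ) + 1) ^ 2 * ‖p (i + 1)‖ ^ 2 - 4) := by field_simp
    rw [this, h5]
    simp only [hg, hnorm]
    simp
    ring
  rw [h6]
  have := hL (i + 1)
  have : 0 ≤ L (i + 1) * ‖b (i + 1) + b i + 2‖ ^ 2 := by positivity
  linarith
end StepAlgebra


section CoefBasics
open ComplexConjugate Real

/-- Taylor coefficients at the origin. -/
def coef (f : ℂ → ℂ) (k : ℕ) : ℂ := ((k.factorial : ℂ))⁻¹ * iteratedDeriv k f 0

/-- holomorphic in the unit disc -/
abbrev HolD (f : ℂ → ℂ) : Prop := DifferentiableOn ℂ f (ball (0 : ℂ) 1)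

theorem HolD.analyticAt {f : ℂ → ℂ} (hf : HolD f) {z : ℂ} (hz : ‖z‖ < 1) : AnalyticAt ℂ f z :=
  DifferentiableOn.analyticAt hf (isOpen_ball.mem_nhds (by simpa using hz))

theorem HolD.contDiffAt {f : ℂ → ℂ} (hf : HolD f) (n : ℕ) : ContDiffAt ℂ n f 0 :=
  (hf.analyticAt (by simp)).contDiffAt

theorem HolD.differentiableAt {f : ℂ → ℂ} (hf : HolD f) {z : ℂ} (hz : ‖z‖ < 1) :
    DifferentiableAt ℂ f z := (hf.analyticAt hz).differentiableAt

theorem HolD.deriv {f : ℂ → ℂ} (hf : HolD f) : HolD (deriv f) :=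
  DifferentiableOn.deriv hf isOpen_ball

theorem HolD.diffContOnCl {f : ℂ → ℂ} (hf : HolD f) {r : ℝ} (hr : r < 1) :
    DiffContOnCl ℂ f (ball 0 r) :=
  DifferentiableOn.diffContOnCl (hf.mono (closure_ball_subset_closedBall.trans
    (closedBall_subset_ball hr)))

theorem coef_zero (f : ℂ → ℂ) : coef f 0 = f 0 := by simp [coef]

theorem coef_one (f : ℂ → ℂ) : coef f 1 = deriv f 0 := by simp [coef]

theorem coef_hasSum {f : ℂ → ℂ} (hf : HolD f) {z : ℂ} (hz : ‖z‖ < 1) :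
    HasSum (fun k => coef f k * z ^ k) (f z) := by
  have := Complex.hasSum_taylorSeries_on_ball (c := 0) (r := 1) hf (z := z) (by simpa using hz)
  have e : (fun k => coef f k * z ^ k) = fun k : ℕ =>
      (k.factorial : ℂ)⁻¹ • (z - 0) ^ k • iteratedDeriv k f 0 := by
    funext k
    simp only [coef, sub_zero, smul_eq_mul]; ring
  rw [e]; exact this

theorem coef_norm_le {f : ℂ → ℂ} (hf : HolD f) {r C : ℝ} (hr0 : 0 < r) (hr : r < 1)
    (hC : ∀ z : ℂ, ‖z‖ = r → ‖f z‖ ≤ C) (k : ℕ) : ‖coef f k‖ ≤ C / r ^ k := by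
  have := Complex.norm_iteratedDeriv_le_of_forall_mem_sphere_norm_le (C := C) k hr0 (hf.diffContOnCl hr)
    (fun z hz => hC z (by simpa using hz))
  unfold coef
  have hk : (0 : ℝ) < k.factorial := by exact_mod_cast Nat.factorial_pos k
  rw [norm_mul, norm_inv, Complex.norm_natCast, inv_mul_le_iff₀ hk, ← mul_div_assoc]
  exact this

theorem coef_congr {f g : ℂ → ℂ} (h : ∀ z : ℂ, ‖z‖ < 1 → f z = g z) (k : ℕ) : coef f k = coef g k := by
  unfold coef
  congr 1
  apply Filter.EventuallyEq.iteratedDeriv_eq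
  filter_upwards [isOpen_ball.mem_nhds (show (0:ℂ) ∈ ball (0:ℂ) 1 by simp)] with z hz
  exact h z (by simpa using hz)

theorem coef_add {f g : ℂ → ℂ} (hf : HolD f) (hg : HolD g) (k : ℕ) :
    coef (fun z => f z + g z) k = coef f k + coef g k := by
  have := iteratedDeriv_add (n := k) (hf.contDiffAt k) (hg.contDiffAt k)
  unfold coef
  rw [show (fun z => f z + g z) = f + g from rfl, this]; ring

theorem coef_sub {f g : ℂ → ℂ} (hf : HolD f) (hg : HolD g) (k : ℕ) :
    coef (fun z => f z - g z) k = coef f k - coef g k := by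
  have := iteratedDeriv_sub (n := k) (hf.contDiffAt k) (hg.contDiffAt k)
  unfold coef
  rw [show (fun z => f z - g z) = f - g from rfl, this]; ring

theorem coef_const_mul (c : ℂ) (f : ℂ → ℂ) (k : ℕ) :
    coef (fun z => c * f z) k = c * coef f k := by
  unfold coef
  rw [iteratedDeriv_const_mul_field]; ring

theorem coef_neg (f : ℂ → ℂ) (k : ℕ) : coef (fun z => - f z) k = - coef f k := by
  unfold coef
  rw [iteratedDeriv_fun_neg]; ring

theorem coef_deriv (f : ℂ → ℂ) (k : ℕ) : coef (deriv f) k = (k + 1) * coef f (k + 1) := by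
  unfold coef
  rw [← iteratedDeriv_succ', Nat.factorial_succ]
  have : (k.factorial : ℂ) ≠ 0 := by exact_mod_cast Nat.factorial_ne_zero k
  have : (k : ℂ) + 1 ≠ 0 := by exact_mod_cast Nat.succ_ne_zero k
  push_cast
  field_simp

theorem coef_mul {f g : ℂ → ℂ} (hf : HolD f) (hg : HolD g) (k : ℕ) :
    coef (fun z => f z * g z) k = ∑ j ∈ Finset.range (k + 1), coef f j * coef g (k - j) := by
  have := iteratedDeriv_mul (n := k) (hf.contDiffAt k) (hg.contDiffAt k)
  unfold coef
  rw [show (fun z => f z * g z) = f * g from rfl, this, Finset.mul_sum]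
  apply Finset.sum_congr rfl
  intro j hj
  have hj := Nat.lt_succ_iff.1 (Finset.mem_range.1 hj)
  rw [Nat.cast_choose ℂ hj]
  have h1 : (k.factorial : ℂ) ≠ 0 := by exact_mod_cast Nat.factorial_ne_zero k
  field_simp

theorem coef_id_mul_zero {f : ℂ → ℂ} : coef (fun z => z * f z) 0 = 0 := by
  rw [coef_zero]; simp

theorem holD_id : HolD (fun z => z) := differentiableOn_id

theorem coef_id_mul {f : ℂ → ℂ} (hf : HolD f) (k : ℕ) :
    coef (fun z => z * f z) (k + 1) = coef f k := by
  rw [coef_mul holD_id hf, Finset.sum_eq_single 1]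
  · rw [coef_one]; simp
  · intro j _ hj
    have : coef (fun z => z) j = 0 := by
      unfold coef
      rw [iteratedDeriv_fun_id]
      rcases j with _ | _ | j
      · simp
      · exact absurd rfl hj
      · simp
    rw [this, zero_mul]
  · intro h; exact absurd (Finset.mem_range.2 (by omega)) h

theorem avg_coef {f : ℂ → ℂ} (hf : HolD f) {r : ℝ} (hr0 : 0 < r) (hr : r < 1) (m : ℕ) :
    circleAverage (fun z => f z * ((r : ℂ) / z) ^ m) 0 r = coef f m * (r : ℂ) ^ m := by
  have hr' : (0 : ℝ) ≤ r := hr0.le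
  lift r to NNReal using hr'
  have h := (hf.diffContOnCl hr).hasFPowerSeriesOnBall (by exact_mod_cast hr0)
  have h1 := h.factorial_smul (r : ℂ) m
  rw [cauchyPowerSeries_apply] at h1
  rw [circleAverage_eq_circleIntegral (by exact_mod_cast hr0.ne')]
  have h2 : iteratedFDeriv ℂ m f 0 (fun _ => ((r : ℝ) : ℂ)) = ((r : ℝ) : ℂ) ^ m * iteratedDeriv m f 0 := by
    have := (iteratedFDeriv ℂ m f 0).map_smul_univ (fun _ => ((r : ℝ) : ℂ)) (fun _ => 1)
    simp only [smul_eq_mul, mul_one, Finset.prod_const, Finset.card_univ, Fintype.card_fin] at this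
    rw [this]; rfl
  rw [h2] at h1
  have h1' : (m.factorial : ℂ) ≠ 0 := by exact_mod_cast Nat.factorial_ne_zero m
  unfold coef
  rw [nsmul_eq_mul] at h1
  have h3 : ((m.factorial : ℂ))⁻¹ * iteratedDeriv m f 0 * ((r : ℝ) : ℂ) ^ m
    = (m.factorial : ℂ)⁻¹ * (((r : ℝ) : ℂ) ^ m * iteratedDeriv m f 0) := by ring
  rw [h3, ← h1, inv_mul_cancel_left₀ h1']
  congr 2
  funext z
  simp only [sub_zero, smul_eq_mul]; ring

theorem avg_conj {f : ℂ → ℂ} (hf : HolD f) {r : ℝ} (hr0 : 0 < r) (hr : r < 1) (m : ℕ) :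
    circleAverage (fun z => conj (f z) * ((r : ℂ) / z) ^ m) 0 r = if m = 0 then conj (f 0) else 0 := by
  have hrc : (r : ℂ) ≠ 0 := by exact_mod_cast hr0.ne'
  have e1 : circleAverage (fun z => conj (f z) * ((r : ℂ) / z) ^ m) 0 r
      = circleAverage (Complex.conjCLE.toContinuousLinearMap ∘ (fun z => f z * (z / r) ^ m)) 0 r := by
    apply circleAverage_congr_sphere
    intro z hz
    have hz' : ‖z‖ = r := by simpa [abs_of_pos hr0] using hz
    have hz0 : z ≠ 0 := by rintro rfl; simp at hz'; linarith
    have : (r : ℂ) / z = conj (z / r) := by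
      rw [map_div₀, Complex.conj_ofReal, div_eq_div_iff hz0 hrc, mul_comm (conj z), Complex.mul_conj,
        Complex.normSq_eq_norm_sq, hz']
      push_cast; ring
    simp [this]
  have hh : HolD (fun z => f z * (z / r) ^ m) := by
    apply DifferentiableOn.mul hf
    fun_prop
  have hcont : ContinuousOn (fun z => f z * (z / r) ^ m) (sphere 0 |r|) :=
    hh.continuousOn.mono (by
      rw [abs_of_pos hr0]
      exact sphere_subset_closedBall.trans (closedBall_subset_ball hr))
  rw [e1, ContinuousLinearMap.circleAverage_comp_comm _ hcont.circleIntegrable']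
  have := (hh.diffContOnCl (r := |r|) (by rwa [abs_of_pos hr0])).circleAverage
  rw [this]
  rcases m with _ | m
  · simp
  · simp
end CoefBasics


section Averaging
open ComplexConjugate Real

theorem HolD.continuousOn_sphere {f : ℂ → ℂ} (hf : HolD f) {r : ℝ} (hr0 : 0 < r) (hr : r < 1) :
    ContinuousOn f (sphere 0 |r|) :=
  hf.continuousOn.mono (by
      rw [abs_of_pos hr0]
      exact sphere_subset_closedBall.trans (closedBall_subset_ball hr))

theorem averaging_r {P : ℂ → ℂ} (hP : HolD P) (hre : ∀ z : ℂ, ‖z‖ < 1 → 0 ≤ (P z).re)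
    (him : (P 0).im = 0) (γ : ℕ → ℂ) (N : ℕ) (e0 : ℝ)
    (h : ∀ κ : ℂ, ‖κ‖ = 1 → e0 + (∑ m ∈ Finset.range N, γ m * (2 * κ ^ (m + 1))).re ≤ 0)
    {r : ℝ} (hr0 : 0 < r) (hr : r < 1) :
    e0 * (P 0).re + (∑ m ∈ Finset.range N, γ m * (coef P (m + 1) * (r : ℂ) ^ (m + 1))).re ≤ 0 := by
  have hcz : ContinuousOn (fun z : ℂ => (r : ℂ) / z) (sphere 0 |r|) := by
    apply ContinuousOn.div continuousOn_const continuousOn_id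
    intro z hz h0
    simp only [id] at h0
    rw [h0] at hz
    simp only [mem_sphere_iff_norm, sub_self, norm_zero] at hz
    rw [abs_of_pos hr0] at hz; linarith
  have hcP := hP.continuousOn_sphere hr0 hr
  have hcP' : ContinuousOn (fun z => conj (P z)) (sphere 0 |r|) :=
    Complex.continuous_conj.comp_continuousOn hcP
  have i1 : ∀ m : ℕ, CircleIntegrable (fun z => P z * ((r : ℂ) / z) ^ m) 0 r := fun m =>
    (hcP.mul (hcz.pow m)).circleIntegrable'
  have i2 : ∀ m : ℕ, CircleIntegrable (fun z => conj (P z) * ((r : ℂ) / z) ^ m) 0 r := fun m =>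
    (hcP'.mul (hcz.pow m)).circleIntegrable'
  have i3 : ∀ m : ℕ, CircleIntegrable (fun z => P z * ((r : ℂ) / z) ^ m
      + conj (P z) * ((r : ℂ) / z) ^ m) 0 r := fun m =>
    ((hcP.mul (hcz.pow m)).add (hcP'.mul (hcz.pow m))).circleIntegrable'
  have c4 : ∀ (c : ℂ) (m : ℕ), ContinuousOn (fun z => c • (P z * ((r : ℂ) / z) ^ m
      + conj (P z) * ((r : ℂ) / z) ^ m)) (sphere 0 |r|) := fun c m =>
    (((hcP.mul (hcz.pow m)).add (hcP'.mul (hcz.pow m))).const_smul c)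
  have i4 : ∀ (c : ℂ) (m : ℕ), CircleIntegrable (fun z => c • (P z * ((r : ℂ) / z) ^ m
      + conj (P z) * ((r : ℂ) / z) ^ m)) 0 r := fun c m =>
    (((hcP.mul (hcz.pow m)).add (hcP'.mul (hcz.pow m))).const_smul c).circleIntegrable'
  have a1 : ∀ (c : ℂ) (m : ℕ), circleAverage (fun z => c • (P z * ((r : ℂ) / z) ^ m
      + conj (P z) * ((r : ℂ) / z) ^ m)) 0 r = c * (coef P m * (r : ℂ) ^ m +
        if m = 0 then conj (P 0) else 0) := by
    intro c m
    rw [circleAverage_fun_smul, circleAverage_fun_add (i1 m) (i2 m), avg_coef hP hr0 hr,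
      avg_conj hP hr0 hr, smul_eq_mul]
  set G : ℂ → ℂ := fun z => ((e0 : ℂ) / 2) • (P z * ((r : ℂ) / z) ^ 0 + conj (P z) * ((r : ℂ) / z) ^ 0)
    + ∑ m ∈ Finset.range N, γ m • (P z * ((r : ℂ) / z) ^ (m + 1) + conj (P z) * ((r : ℂ) / z) ^ (m + 1))
    with hG
  have iG : CircleIntegrable G 0 r := by
    apply CircleIntegrable.add (i4 _ _)
    apply CircleIntegrable.fun_sum
    intro m _
    exact i4 _ _
  have aG : circleAverage G 0 r = e0 * (P 0).re
      + ∑ m ∈ Finset.range N, γ m * (coef P (m + 1) * (r : ℂ) ^ (m + 1)) := by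
    rw [hG, circleAverage_fun_add (i4 _ _) (by
      apply CircleIntegrable.fun_sum
      intro m _
      exact i4 _ _), circleAverage_fun_sum (fun m _ => i4 _ _), a1]
    congr 1
    · rw [coef_zero, if_pos rfl, pow_zero, mul_one, Complex.add_conj]; push_cast; ring
    · apply Finset.sum_congr rfl
      intro m _
      rw [a1]; simp
  have hre' : circleAverage (Complex.reCLM ∘ G) 0 r = (circleAverage G 0 r).re := by
    rw [ContinuousLinearMap.circleAverage_comp_comm _ iG]; rfl
  have hfin : e0 * (P 0).re + (∑ m ∈ Finset.range N, γ m * (coef P (m + 1) * (r : ℂ) ^ (m + 1))).re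
      = circleAverage (Complex.reCLM ∘ G) 0 r := by
    rw [hre', aG, Complex.add_re, Complex.re_ofReal_mul, Complex.ofReal_re]
  rw [hfin]
  have hmono := circleAverage_mono_on_of_le_circle (a := 0) (f := Complex.reCLM ∘ G) (c := 0) (R := r)
    (by
      have hcG : ContinuousOn G (sphere 0 |r|) := by
        apply ContinuousOn.add
        · exact c4 _ _
        · apply continuousOn_finsetSum
          intro m _
          exact c4 _ _
      exact (Complex.reCLM.continuous.comp_continuousOn hcG).circleIntegrable')
    (by
      intro z hz
      have hz' : ‖z‖ = r := by simpa [abs_of_pos hr0] using hz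
      have hk : ‖(r : ℂ) / z‖ = 1 := by
        rw [norm_div, hz', Complex.norm_real, norm_of_nonneg hr0.le, div_self hr0.ne']
      have e1 : G z = ((P z).re : ℂ) * (e0 + ∑ m ∈ Finset.range N, γ m * (2 * ((r : ℂ) / z) ^ (m + 1))) := by
        simp only [hG]
        rw [mul_add, Finset.mul_sum]
        have h2 := Complex.add_conj (P z)
        push_cast at h2
        congr 1
        · rw [pow_zero, mul_one, mul_one, smul_eq_mul]; linear_combination (e0 / 2 : ℂ) * h2
        · apply Finset.sum_congr rfl
          intro m _
          rw [smul_eq_mul]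
          linear_combination (γ m * ((r : ℂ) / z) ^ (m + 1)) * h2
      have h3 := h _ hk
      have h4 := hre z (by rw [hz']; exact hr)
      simp only [Function.comp, Complex.reCLM_apply]
      rw [e1, Complex.re_ofReal_mul, Complex.add_re, Complex.ofReal_re]
      exact mul_nonpos_of_nonneg_of_nonpos h4 h3)
  exact hmono

theorem averaging {P : ℂ → ℂ} (hP : HolD P) (hre : ∀ z : ℂ, ‖z‖ < 1 → 0 ≤ (P z).re)
    (him : (P 0).im = 0) (γ : ℕ → ℂ) (N : ℕ) (e0 : ℝ)
    (h : ∀ κ : ℂ, ‖κ‖ = 1 → e0 + (∑ m ∈ Finset.range N, γ m * (2 * κ ^ (m + 1))).re ≤ 0) :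
    e0 * (P 0).re + (∑ m ∈ Finset.range N, γ m * coef P (m + 1)).re ≤ 0 := by
  have hc : Continuous (fun r : ℝ => e0 * (P 0).re +
      (∑ m ∈ Finset.range N, γ m * (coef P (m + 1) * (r : ℂ) ^ (m + 1))).re) := by fun_prop
  have ht := (hc.tendsto 1).mono_left (nhdsWithin_le_nhds (s := Iio 1))
  simp only [Complex.ofReal_one, one_pow, mul_one] at ht
  refine le_of_tendsto ht ?_
  have : Ioo (0:ℝ) 1 ∈ nhdsWithin (1:ℝ) (Iio 1) := Ioo_mem_nhdsLT (by norm_num)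
  filter_upwards [this] with r hr
  exact averaging_r hP hre him γ N e0 h hr.1 hr.2

theorem averaging_lin {P : ℂ → ℂ} (hP : HolD P) (hre : ∀ z : ℂ, ‖z‖ < 1 → 0 ≤ (P z).re)
    (hP0 : P 0 = 1) (Φ : (ℕ → ℂ) →ₗ[ℂ] ℂ) (N : ℕ)
    (hΦ : ∀ x : ℕ → ℂ, (∀ m ≤ N, x m = 0) → Φ x = 0) (e : ℝ)
    (h : ∀ (κ : ℂ) (ρ : ℕ → ℂ), ‖κ‖ = 1 → ρ 0 = 1 → (∀ m, ρ (m + 1) = 2 * κ ^ (m + 1)) →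
      e + (Φ ρ).re ≤ 0) :
    e + (Φ (coef P)).re ≤ 0 := by
  have hrep : ∀ x : ℕ → ℂ, x 0 = 1 → Φ x = Φ (Pi.single 0 1) +
      ∑ m ∈ Finset.range N, Φ (Pi.single (m + 1) 1) * x (m + 1) := by
    intro x hx
    have h1 : Φ (x - ∑ m ∈ Finset.range (N + 1), x m • Pi.single m (1:ℂ)) = 0 := by
      apply hΦ
      intro m hm
      rw [Pi.sub_apply, Finset.sum_apply, Finset.sum_eq_single m]
      · simp
      · intro j _ hj; simp [Pi.single_apply, Ne.symm hj]
      · intro h; exact absurd (Finset.mem_range.2 (by omega)) h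
    rw [map_sub, sub_eq_zero] at h1
    rw [h1, map_sum, Finset.sum_range_succ', add_comm]
    congr 1
    · rw [hx, one_smul]
    · apply Finset.sum_congr rfl
      intro m _
      rw [map_smul, smul_eq_mul, mul_comm]
  have key := averaging hP hre (by rw [hP0]; simp) (fun m => Φ (Pi.single (m + 1) 1)) N
    (e + (Φ (Pi.single 0 1)).re) (by
      intro κ hκ
      have h2 := h κ (fun m => if m = 0 then 1 else 2 * κ ^ m) hκ (by simp) (by intro m; simp)
      rw [hrep _ (by simp), Complex.add_re] at h2
      simp only [Nat.succ_ne_zero, if_false] at h2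
      linarith)
  rw [hrep _ (by rw [coef_zero, hP0]), Complex.add_re]
  rw [hP0, Complex.one_re] at key
  linarith

theorem caratheodory {P : ℂ → ℂ} (hP : HolD P) (hre : ∀ z : ℂ, ‖z‖ < 1 → 0 ≤ (P z).re)
    (him : (P 0).im = 0) (k : ℕ) : ‖coef P (k + 1)‖ ≤ 2 * (P 0).re := by
  obtain ⟨u, hu, hu2⟩ : ∃ u : ℂ, ‖u‖ ≤ 1 ∧ (u * coef P (k + 1)).re = ‖coef P (k + 1)‖ := by
    by_cases h0 : coef P (k + 1) = 0
    · exact ⟨0, by simp, by simp [h0]⟩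
    · have hn : ‖coef P (k + 1)‖ ≠ 0 := by simpa using h0
      refine ⟨conj (coef P (k + 1)) / ‖coef P (k + 1)‖, ?_, ?_⟩
      · rw [norm_div, Complex.norm_conj, Complex.norm_real, norm_norm, div_self hn]
      · rw [div_mul_eq_mul_div, mul_comm, Complex.mul_conj, Complex.normSq_eq_norm_sq]
        rw [← Complex.ofReal_div, Complex.ofReal_re]; field_simp
  have := averaging hP hre him (fun m => if m = k then u else 0) (k + 1) (-2) (by
    intro κ hκ
    rw [Finset.sum_eq_single k]
    · simp only [if_true]
      have h1 : ‖u * (2 * κ ^ (k + 1))‖ ≤ 2 := by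
        rw [norm_mul, norm_mul, norm_pow, hκ, one_pow, mul_one]
        simp; linarith
      have h2 := (abs_le.1 (Complex.abs_re_le_norm (u * (2 * κ ^ (k + 1))))).2
      linarith
    · intro j _ hj; simp [hj]
    · intro h; exact absurd (Finset.mem_range.2 (by omega)) h)
  rw [Finset.sum_eq_single k] at this
  · simp only [if_true] at this
    rw [hu2] at this; linarith
  · intro j _ hj; simp [hj]
  · intro h; exact absurd (Finset.mem_range.2 (by omega)) h
end Averaging


section QuadRem

theorem quad_rem {E F : Type*} [NormedAddCommGroup E] [NormedSpace ℂ E] [NormedAddCommGroup F]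
    [NormedSpace ℂ F] {f : E → F} {c z : E} {R C : ℝ} (hd : DifferentiableOn ℂ f (ball c R))
    (hm : MapsTo f (ball c R) (closedBall (f c) C)) (hz : z ∈ ball c R) :
    ‖f z - f c - fderiv ℂ f c (z - c)‖ ≤ 2 * C * (‖z - c‖ / R) ^ 2 := by
  have hR : 0 < R := nonempty_ball.1 ⟨z, hz⟩
  have hC : 0 ≤ C := nonempty_closedBall.mp ⟨_, hm hz⟩
  have hdc : DifferentiableAt ℂ f c := hd.differentiableAt (ball_mem_nhds c hR)
  set G : E → F := fun z => f z - fderiv ℂ f c (z - c) with hG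
  have hGc : G c = f c := by simp [hG]
  have hdG : DifferentiableOn ℂ G (ball c R) := by
    apply hd.sub
    apply Differentiable.differentiableOn
    exact (fderiv ℂ f c).differentiable.comp (differentiable_id.sub_const c)
  have hmG : MapsTo G (ball c R) (closedBall (G c) (2 * C)) := by
    intro y hy
    rw [mem_closedBall_iff_norm, hGc]
    have h1 := hm hy
    rw [mem_closedBall_iff_norm] at h1
    have h2 := Complex.norm_fderiv_le_div_of_mapsTo_ball hd hm hR
    have h3 : ‖fderiv ℂ f c (y - c)‖ ≤ C := by
      refine ((fderiv ℂ f c).le_opNorm _).trans ?_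
      rw [mem_ball_iff_norm] at hy
      calc _ ≤ C / R * R := by gcongr
        _ = C := by field_simp
    calc ‖G y - f c‖ = ‖(f y - f c) - fderiv ℂ f c (y - c)‖ := by simp only [hG]; congr 1; abel
      _ ≤ _ := norm_sub_le _ _
      _ ≤ 2 * C := by linarith
  have ho : (G · - G c) =o[nhds c] (fun w => ‖w - c‖ ^ 1) := by
    simp only [pow_one]
    rw [Asymptotics.isLittleO_norm_right]
    have := hdc.hasFDerivAt.isLittleO
    refine this.congr_left ?_
    intro x
    rw [hGc]; simp only [hG]; abel
  have := Complex.dist_le_mul_div_pow_of_mapsTo_ball_of_isLittleO hdG hmG ho hz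
  rw [dist_eq_norm, dist_eq_norm, hGc] at this
  calc _ = ‖G z - f c‖ := by simp only [hG]; congr 1; abel
    _ ≤ _ := this

end QuadRem

section Step
open ComplexConjugate

theorem norm_le_of_coef {f : ℂ → ℂ} (hf : HolD f) {C r : ℝ} (hC : ∀ k, ‖coef f k‖ ≤ C) 
    (hr : r < 1) {z : ℂ} (hz : ‖z‖ ≤ r) : ‖f z‖ ≤ C * (1 - r)⁻¹ := by
  have hr0 : 0 ≤ r := (norm_nonneg z).trans hz
  have h := coef_hasSum hf (hz.trans_lt hr)
  rw [← h.tsum_eq]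
  refine tsum_of_norm_bounded ((hasSum_geometric_of_lt_one hr0 hr).mul_left C) ?_
  intro k
  rw [norm_mul, norm_pow]
  have := hC k
  have hC0 : 0 ≤ C := (norm_nonneg _).trans this
  gcongr

/-- Class of functions with nonnegative real part, real at zero. -/
structure Zc (p : ℂ → ℂ) : Prop where
  hol : HolD p
  re : ∀ z : ℂ, ‖z‖ < 1 → 0 ≤ (p z).re
  im : (p 0).im = 0

theorem Zc.zero_eq {p : ℂ → ℂ} (h : Zc p) : p 0 = ((p 0).re : ℂ) := by
  apply Complex.ext <;> simp [h.im]

theorem Zc.coef_le {p : ℂ → ℂ} (h : Zc p) {T : ℝ} (hT : (p 0).re ≤ T) (k : ℕ) : ‖coef p k‖ ≤ 2 * T := by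
  have h0 := h.re 0 (by simp)
  cases k with
  | zero => 
    rw [coef_zero, h.zero_eq, Complex.norm_real, Real.norm_of_nonneg h0]; linarith
  | succ k => 
    have := caratheodory h.hol h.re h.im k
    linarith

/-- the self-map associated with `p`. -/
def kap (p : ℂ → ℂ) (z : ℂ) : ℂ := z * Complex.exp (- p z)

theorem kap_zero (p : ℂ → ℂ) : kap p 0 = 0 := by simp [kap]

theorem Zc.kap_norm {p : ℂ → ℂ} (h : Zc p) {z : ℂ} (hz : ‖z‖ < 1) : ‖kap p z‖ ≤ ‖z‖ := by
  rw [kap, norm_mul, Complex.norm_exp]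
  apply mul_le_of_le_one_right (norm_nonneg _)
  have := h.re z hz
  simpa using this

theorem Zc.kap_lt {p : ℂ → ℂ} (h : Zc p) {z : ℂ} (hz : ‖z‖ < 1) : ‖kap p z‖ < 1 :=
  (h.kap_norm hz).trans_lt hz

theorem Zc.kap_hol {p : ℂ → ℂ} (h : Zc p) : HolD (kap p) :=
  differentiableOn_id.mul (h.hol.neg.cexp)

theorem HolD.comp {f g : ℂ → ℂ} (hf : HolD f) (hg : HolD g) (hm : ∀ z : ℂ, ‖z‖ < 1 → ‖g z‖ < 1) :
    HolD (fun z => f (g z)) :=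
  DifferentiableOn.comp hf hg (fun z hz => by simpa using hm z (by simpa using hz))

/-- composition law -/
theorem Zc.compose {p q : ℂ → ℂ} (hp : Zc p) (hq : Zc q) : Zc (fun z => q z + p (kap q z)) where
  hol := DifferentiableOn.add hq.hol (hp.hol.comp hq.kap_hol (fun _ hz => hq.kap_lt hz))
  re := fun z hz => by
    have := hq.re z hz
    have := hp.re _ (hq.kap_lt hz)
    simp only [Complex.add_re]; linarith
  im := by simp [kap_zero, hp.im, hq.im]

theorem kap_compose (p q : ℂ → ℂ) (z : ℂ) : kap p (kap q z) = kap (fun z => q z + p (kap q z)) z := by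
  simp only [kap]
  rw [mul_assoc, ← Complex.exp_add, neg_add]

/-- first order expansion -/
theorem step_expand {p P : ℂ → ℂ} {T : ℝ} (hp : Zc p) (hpT : (p 0).re ≤ T) (hP : Zc P) (hP0 : P 0 = 1)
    {h : ℝ} (h0 : 0 < h) (h1 : h < 1 / 16) {z : ℂ} (hz : ‖z‖ = 1 / 2) :
    ‖p (z * Complex.exp (-(h * P z))) - p z + h * (z * (deriv p z * P z))‖ ≤ 8192 * T * h ^ 2 := by
  have hPz : ‖P z‖ ≤ 4 := by
    have := norm_le_of_coef hP.hol (hP.coef_le (T := 1) (by simp [hP0])) (r := 1/2) (by norm_num) hz.le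
    norm_num at this; exact this
  have hpb : ∀ w : ℂ, ‖w‖ ≤ 3 / 4 → ‖p w‖ ≤ 8 * T := by
    intro w hw
    have := norm_le_of_coef hp.hol (hp.coef_le hpT) (r := 3/4) (by norm_num) hw
    norm_num at this; linarith
  have hexp : Real.exp (1 / 4) ≤ 4 / 3 := by
    have h2 := Real.add_one_le_exp (-(1/4 : ℝ))
    have h3 : Real.exp (1/4) * Real.exp (-(1/4)) = 1 := by rw [← Real.exp_add]; simp
    have h4 := Real.exp_pos (1/4)
    nlinarith
  have harg : ∀ w : ℂ, ‖w‖ < 1 / 16 → ‖z * Complex.exp (-(w * P z))‖ ≤ 3 / 4 := by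
    intro w hw
    rw [norm_mul, hz]
    have h5 : ‖Complex.exp (-(w * P z))‖ ≤ 4 / 3 := by
      refine (Complex.norm_exp_le_exp_norm _).trans (le_trans (Real.exp_le_exp.2 ?_) hexp)
      rw [norm_neg, norm_mul]
      nlinarith [norm_nonneg w, norm_nonneg (P z)]
    linarith
  set g : ℂ → ℂ := fun w => p (z * Complex.exp (-(w * P z))) with hg
  have hga : ∀ w : ℂ, ‖w‖ < 1 / 16 → HasDerivAt g (deriv p (z * Complex.exp (-(w * P z))) * 
      (z * (Complex.exp (-(w * P z)) * -(P z)))) w := by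
    intro w hw
    have e1 : HasDerivAt (fun w : ℂ => z * Complex.exp (-(w * P z))) 
        (z * (Complex.exp (-(w * P z)) * -(1 * P z))) w := 
      (((hasDerivAt_id w).mul_const (P z)).neg.cexp).const_mul z
    rw [one_mul] at e1
    have e2 := (hp.hol.differentiableAt ((harg w hw).trans_lt (by norm_num))).hasDerivAt
    exact e2.comp w e1
  have hdg : DifferentiableOn ℂ g (ball 0 (1/16)) := fun w hw => 
    (hga w (by simpa using hw)).differentiableAt.differentiableWithinAt
  have hgb : ∀ w : ℂ, ‖w‖ < 1 / 16 → ‖g w‖ ≤ 8 * T := fun w hw => hpb _ (harg w hw)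
  have hmg : MapsTo g (ball 0 (1/16)) (closedBall (g 0) (16 * T)) := by
    intro w hw
    rw [mem_closedBall_iff_norm]
    have a1 := hgb w (by simpa using hw)
    have a2 := hgb 0 (by simp)
    linarith [norm_sub_le (g w) (g 0)]
  have hh : ‖(h : ℂ)‖ = h := by rw [Complex.norm_real, Real.norm_of_nonneg h0.le]
  have key := quad_rem hdg hmg (z := (h : ℂ)) (by rw [mem_ball_zero_iff, hh]; exact h1)
  have hder : deriv g 0 = - (z * (deriv p z * P z)) := by
    rw [(hga 0 (by simp)).deriv]; simp; ring
  rw [← toSpanSingleton_deriv, hder, sub_zero, hh] at key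
  have e3 : g h - g 0 - (ContinuousLinearMap.toSpanSingleton ℂ (- (z * (deriv p z * P z)))) (h : ℂ) = 
      p (z * Complex.exp (-(h * P z))) - p z + h * (z * (deriv p z * P z)) := by
    simp [hg]
  rw [e3] at key
  calc _ ≤ _ := key
    _ = _ := by ring

theorem step_coef {p P : ℂ → ℂ} {T : ℝ} (hp : Zc p) (hpT : (p 0).re ≤ T) (hP : Zc P) (hP0 : P 0 = 1)
    {h : ℝ} (h0 : 0 < h) (h1 : h < 1 / 16) (i : ℕ) :
    ‖coef (fun z => h * P z + p (kap (fun z => h * P z) z)) (i + 1) - coef p (i + 1) - h * (coef P (i + 1) - 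
      ∑ j ∈ Finset.range (i + 1), (j + 1) * coef p (j + 1) * coef P (i - j))‖ ≤ 8192 * T * 2 ^ (i + 1) * h ^ 2 := by
  have hq : Zc (fun z => h * P z) := 
    ⟨hP.hol.const_mul _, fun z hz => by
      rw [Complex.re_ofReal_mul]; exact mul_nonneg h0.le (hP.re z hz), by simp [hP0]⟩
  have d1 : HolD (fun z => deriv p z * P z) := DifferentiableOn.mul hp.hol.deriv hP.hol
  have d2 : HolD (fun z => z * (deriv p z * P z)) := DifferentiableOn.mul holD_id d1
  have d3 : HolD (fun z => (h : ℂ) * (z * (deriv p z * P z))) := d2.const_mul _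
  have d4 : HolD (fun z => p (kap (fun z => h * P z) z)) := hp.hol.comp hq.kap_hol (fun _ hz => hq.kap_lt hz)
  have d5 : HolD (fun z => p (kap (fun z => h * P z) z) - p z) := DifferentiableOn.sub d4 hp.hol
  have d6 : HolD (fun z => (p (kap (fun z => h * P z) z) - p z) + h * (z * (deriv p z * P z))) := 
    DifferentiableOn.add d5 d3
  have key := coef_norm_le d6 (r := 1/2) (C := 8192 * T * h ^ 2) (by norm_num) (by norm_num) 
    (fun z hz => step_expand hp hpT hP hP0 h0 h1 hz) (i + 1)
  rw [coef_add d5 d3, coef_sub d4 hp.hol, coef_const_mul, coef_id_mul d1, coef_mul hp.hol.deriv hP.hol] at key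
  rw [coef_add hq.hol d4, coef_const_mul]
  simp only [coef_deriv] at key
  calc _ = _ := by
        congr 1; ring
    _ ≤ _ := key
    _ = _ := by rw [one_div, inv_pow, div_inv_eq_mul]; ring

theorem norm_add_sq_re (A B : ℂ) : ‖A + B‖ ^ 2 = ‖A‖ ^ 2 + 2 * (conj A * B).re + ‖B‖ ^ 2 := by
  rw [← Complex.normSq_eq_norm_sq, ← Complex.normSq_eq_norm_sq, ← Complex.normSq_eq_norm_sq]
  simp [Complex.normSq_apply]; ring

theorem term_est (n i : ℕ) (hi : i < n) (a b c : ℝ) (ha : 0 ≤ a) (hb : 0 ≤ b) (hc : 0 ≤ c) :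
    ∃ C : ℝ, 0 ≤ C ∧ ∀ (t h : ℝ) (A B E : ℂ), 0 ≤ t → 0 < h → h ≤ 1 → ‖A‖ ≤ a → ‖B‖ ≤ b → ‖E‖ ≤ c * h ^ 2 →
    tau n (i + 1) t * ((i + 1) * ‖A + h * B + E‖ ^ 2 - 4 / (i + 1)) ≤
    tau n (i + 1) (t + h) * ((i + 1) * ‖A‖ ^ 2 - 4 / (i + 1)) +
    h * (((i + 1) * lamt n (i + 1) (t + h)) * ((i + 1) * ‖A‖ ^ 2 - 4 / (i + 1)) +
      2 * (tau n (i + 1) (t + h) * ((i + 1) * (conj A * B).re))) + C * h ^ 2 := by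
  obtain ⟨C1, hC1, H1⟩ := tau_taylor n (i + 1) (by omega)
  obtain ⟨C2, hC2, H2⟩ := lamt_bound n (i + 1)
  obtain ⟨C3, hC3, H3⟩ := tau_bound n (i + 1) (by omega)
  refine ⟨C1 * ((i + 1) * a ^ 2 + 4) + (C1 + (i + 1) * C2) * ((i + 1) * (2 * (a * b))) +
    C3 * ((i + 1) * (2 * (a * c) + (b + c) ^ 2)), by positivity, ?_⟩
  intro t h A B E ht h0 h1 hA hB hE
  have hth : 0 ≤ t + h := by linarith
  have T1 := H1 t h ht h0.le
  have T2 := H2 (t + h) hth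
  have T3 := H3 t ht
  push_cast at T1
  set k : ℝ := (i : ℝ) + 1 with hk
  have hk1 : 1 ≤ k := by rw [hk]; linarith [(Nat.cast_nonneg i : (0:ℝ) ≤ i)]
  set τt := tau n (i + 1) t
  set τs := tau n (i + 1) (t + h)
  set l := lamt n (i + 1) (t + h)
  set x : ℝ := (conj A * B).re with hx
  have hxb : |x| ≤ a * b := by
    refine (Complex.abs_re_le_norm _).trans ?_
    rw [norm_mul, Complex.norm_conj]; gcongr
  obtain ⟨R, hR, hRb⟩ : ∃ R : ℝ, ‖A + h * B + E‖ ^ 2 = ‖A‖ ^ 2 + 2 * h * x + R ∧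
      |R| ≤ (2 * (a * c) + (b + c) ^ 2) * h ^ 2 := by
    refine ⟨2 * (conj A * E).re + ‖h * B + E‖ ^ 2, ?_, ?_⟩
    · rw [add_assoc, norm_add_sq_re, mul_add, Complex.add_re, mul_left_comm, Complex.re_ofReal_mul]; ring
    · have r1 : |(conj A * E).re| ≤ a * (c * h ^ 2) := by
        refine (Complex.abs_re_le_norm _).trans ?_
        rw [norm_mul, Complex.norm_conj]; gcongr
      have r2 : ‖h * B + E‖ ≤ (b + c) * h := by
        refine (norm_add_le _ _).trans ?_
        rw [norm_mul, Complex.norm_real, Real.norm_of_nonneg h0.le]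
        have : h * ‖B‖ ≤ h * b := by gcongr
        have : c * h ^ 2 ≤ c * h := by gcongr; nlinarith
        linarith
      have r3 : ‖h * B + E‖ ^ 2 ≤ ((b + c) * h) ^ 2 := by gcongr
      rw [abs_le] at r1 ⊢
      constructor <;> nlinarith [sq_nonneg ‖h * B + E‖]
  rw [hR]
  have hdiv : 4 / k ≤ 4 := by rw [div_le_iff₀ (by linarith)]; linarith
  have hdiv0 : 0 ≤ 4 / k := by positivity
  have hV : |k * ‖A‖ ^ 2 - 4 / k| ≤ k * a ^ 2 + 4 := by
    have : k * ‖A‖ ^ 2 ≤ k * a ^ 2 := by gcongr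
    have : 0 ≤ k * ‖A‖ ^ 2 := by positivity
    rw [abs_le]; constructor <;> linarith [show 0 ≤ k * a ^ 2 by positivity]
  have hDd : |τt - τs| ≤ (C1 + k * C2) * h := by
    have e : τt - τs = (τt - τs - h * (k * l)) + h * (k * l) := by ring
    rw [e]
    refine (abs_add_le _ _).trans ?_
    have : |h * (k * l)| ≤ h * (k * C2) := by
      rw [abs_mul, abs_mul, abs_of_pos h0, abs_of_pos (by linarith : 0 < k)]; gcongr
    have : C1 * h ^ 2 ≤ C1 * h := by gcongr; nlinarith
    linarith
  have m1 : (τt - τs - h * (k * l)) * (k * ‖A‖ ^ 2 - 4 / k) ≤ C1 * h ^ 2 * (k * a ^ 2 + 4) := by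
    refine (le_abs_self _).trans ?_
    rw [abs_mul]; gcongr
  have m2 : (τt - τs) * (k * (2 * h * x)) ≤ (C1 + k * C2) * h * (k * (2 * h * (a * b))) := by
    refine (le_abs_self _).trans ?_
    rw [abs_mul, abs_mul, abs_mul, abs_of_pos (by linarith : 0 < k), abs_of_pos (by linarith : 0 < 2 * h)]
    gcongr
  have m3 : τt * (k * R) ≤ C3 * (k * ((2 * (a * c) + (b + c) ^ 2) * h ^ 2)) := by
    refine (le_abs_self _).trans ?_
    rw [abs_mul, abs_mul, abs_of_pos (by linarith : 0 < k)]
    gcongr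
  have e : τt * (k * (‖A‖ ^ 2 + 2 * h * x + R) - 4 / k) =
      τs * (k * ‖A‖ ^ 2 - 4 / k) + h * (k * l * (k * ‖A‖ ^ 2 - 4 / k) + 2 * (τs * (k * x))) +
      ((τt - τs - h * (k * l)) * (k * ‖A‖ ^ 2 - 4 / k) + (τt - τs) * (k * (2 * h * x)) + τt * (k * R)) := by
    ring
  rw [e]
  have e2 : (C1 * (k * a ^ 2 + 4) + (C1 + k * C2) * (k * (2 * (a * b))) +
    C3 * (k * (2 * (a * c) + (b + c) ^ 2))) * h ^ 2 = C1 * h ^ 2 * (k * a ^ 2 + 4) +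
    (C1 + k * C2) * h * (k * (2 * h * (a * b))) + C3 * (k * ((2 * (a * c) + (b + c) ^ 2) * h ^ 2)) := by ring
  rw [e2]
  linarith

end Step


section Step2
open ComplexConjugate

/-- the linear functional appearing in the derivative of the de Branges functional -/
def PhiLin (n : ℕ) (T : ℕ → ℝ) (p : ℕ → ℂ) : (ℕ → ℂ) →ₗ[ℂ] ℂ where
  toFun x := ∑ i ∈ Finset.range n, (2 * T (i + 1) * (i + 1)) * (conj (p (i + 1)) *
    (x (i + 1) - ∑ j ∈ Finset.range (i + 1), (j + 1) * p (j + 1) * x (i - j)))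
  map_add' x y := by
    rw [← Finset.sum_add_distrib]
    apply Finset.sum_congr rfl
    intro i _
    simp only [Pi.add_apply, mul_add, Finset.sum_add_distrib]
    ring
  map_smul' c x := by
    rw [RingHom.id_apply, smul_eq_mul, Finset.mul_sum]
    apply Finset.sum_congr rfl
    intro i _
    simp only [Pi.smul_apply, smul_eq_mul]
    have : ∑ j ∈ Finset.range (i + 1), ((j : ℂ) + 1) * p (j + 1) * (c * x (i - j)) =
      c * ∑ j ∈ Finset.range (i + 1), ((j : ℂ) + 1) * p (j + 1) * x (i - j) := by
      rw [Finset.mul_sum]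
      apply Finset.sum_congr rfl
      intro j _
      ring
    rw [this]; ring

theorem PhiLin_re (n : ℕ) (T : ℕ → ℝ) (p x : ℕ → ℂ) : (PhiLin n T p x).re =
    2 * ∑ i ∈ Finset.range n, T (i + 1) * ((i + 1) * (conj (p (i + 1)) *
    (x (i + 1) - ∑ j ∈ Finset.range (i + 1), (j + 1) * p (j + 1) * x (i - j))).re) := by
  show (∑ i ∈ Finset.range n, _ : ℂ).re = _
  rw [Complex.re_sum, Finset.mul_sum]
  apply Finset.sum_congr rfl
  intro i _
  have : (2 * (T (i + 1) : ℂ) * ((i : ℂ) + 1)) = ((2 * T (i + 1) * ((i : ℝ) + 1) : ℝ) : ℂ) := by push_cast; ring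
  rw [this, Complex.re_ofReal_mul]; ring

theorem first_order (n : ℕ) (p : ℕ → ℂ) {P : ℂ → ℂ} (hP : Zc P) (hP0 : P 0 = 1) (s : ℝ) (hs : 0 ≤ s) :
    ∑ i ∈ Finset.range n, (((i + 1) * lamt n (i + 1) s) * ((i + 1) * ‖p (i + 1)‖ ^ 2 - 4 / (i + 1)) +
      2 * (tau n (i + 1) s * ((i + 1) * (conj (p (i + 1)) *
    (coef P (i + 1) - ∑ j ∈ Finset.range (i + 1), (j + 1) * p (j + 1) * coef P (i - j))).re))) ≤ 0 := by
  have := averaging_lin hP.hol hP.re hP0 (PhiLin n (fun k => tau n k s) p) n (by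
    intro x hx
    show (∑ i ∈ Finset.range n, _ : ℂ) = _
    apply Finset.sum_eq_zero
    intro i hi
    have hi := Finset.mem_range.1 hi
    rw [hx (i + 1) (by omega), Finset.sum_eq_zero]
    · simp
    · intro j _
      rw [hx _ (by omega), mul_zero])
    (∑ i ∈ Finset.range n, ((i + 1) * lamt n (i + 1) s) * ((i + 1) * ‖p (i + 1)‖ ^ 2 - 4 / (i + 1))) (by
    intro κ ρ hκ h0 hρ
    rw [PhiLin_re]
    exact deBranges_ineq n (fun k => tau n k s) (fun k => lamt n k s) (fun k => lamt_nonneg n k s hs)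
      (fun k hk => tau_sub n k hk s) (tau_top n s) (lamt_top n s) p ρ κ hκ h0 hρ)
  rw [PhiLin_re] at this
  rw [Finset.sum_add_distrib, ← Finset.mul_sum]
  exact this

/-- de Branges functional -/
def Mf (n : ℕ) (p : ℂ → ℂ) (t : ℝ) : ℝ :=
  ∑ i ∈ Finset.range n, tau n (i + 1) t * ((i + 1) * ‖coef p (i + 1)‖ ^ 2 - 4 / (i + 1))

theorem step_lemma (n : ℕ) (T ε : ℝ) (hT : 0 ≤ T) (hε : 0 < ε) : ∃ δ : ℝ, 0 < δ ∧
    ∀ p q : ℂ → ℂ, Zc p → Zc q → (p 0).re ≤ T → 0 < (q 0).re → (q 0).re ≤ δ → ∀ t : ℝ, 0 ≤ t →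
    Mf n (fun z => q z + p (kap q z)) t ≤ Mf n p (t + (q 0).re) + ε * (q 0).re := by
  have H := fun (i : ℕ) => fun (hi : i < n) => term_est n i hi (2 * T)
    (2 + ∑ j ∈ Finset.range (i + 1), ((j : ℝ) + 1) * (2 * T) * 2)
    (8192 * T * 2 ^ (i + 1)) (by positivity) (by positivity) (by positivity)
  choose! C hC0 hC using H
  have hCs : 0 ≤ ∑ i ∈ Finset.range n, C i := Finset.sum_nonneg (fun i hi => hC0 i (Finset.mem_range.1 hi))
  set S := ∑ i ∈ Finset.range n, C i with hS
  refine ⟨min (1 / 17) (ε / (S + 1)), by positivity, ?_⟩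
  intro p q hp hq hpT hq0 hqδ t ht
  set h := (q 0).re with hh
  have hh1 : h < 1 / 16 := lt_of_le_of_lt (hqδ.trans (min_le_left _ _)) (by norm_num)
  have hh2 : h * (S + 1) ≤ ε := by
    rw [← le_div_iff₀ (by linarith)]; exact hqδ.trans (min_le_right _ _)
  have hhc : (h : ℂ) ≠ 0 := by exact_mod_cast hq0.ne'
  set P : ℂ → ℂ := fun z => ((h⁻¹ : ℝ) : ℂ) * q z with hPdef
  have hqP : q = fun z => h * P z := by
    funext z; simp only [hPdef]; push_cast; field_simp
  have hP : Zc P := ⟨hq.hol.const_mul _, fun z hz => by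
      rw [Complex.re_ofReal_mul]; exact mul_nonneg (inv_nonneg.2 hq0.le) (hq.re z hz), by
      simp [hPdef, hq.im]⟩
  have hP0 : P 0 = 1 := by
    simp only [hPdef]; rw [hq.zero_eq, ← hh]; push_cast; field_simp
  have hPc : ∀ k, ‖coef P k‖ ≤ 2 := fun k => by
    simpa using hP.coef_le (T := 1) (by simp [hP0]) k
  have hpc := hp.coef_le hpT
  rw [hqP]
  have hsum : Mf n (fun z => h * P z + p (kap (fun z => h * P z) z)) t ≤ Mf n p (t + h) + 
      h * ∑ i ∈ Finset.range n, (((i + 1) * lamt n (i + 1) (t + h)) * ((i + 1) * ‖coef p (i + 1)‖ ^ 2 - 4 / (i + 1)) +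
      2 * (tau n (i + 1) (t + h) * ((i + 1) * (conj (coef p (i + 1)) *
    (coef P (i + 1) - ∑ j ∈ Finset.range (i + 1), (j + 1) * coef p (j + 1) * coef P (i - j))).re))) + S * h ^ 2 := by
    rw [Mf, Mf, hS, Finset.mul_sum, Finset.sum_mul, ← Finset.sum_add_distrib, ← Finset.sum_add_distrib]
    apply Finset.sum_le_sum
    intro i hi
    have hi := Finset.mem_range.1 hi
    set B := coef P (i + 1) - ∑ j ∈ Finset.range (i + 1), (j + 1) * coef p (j + 1) * coef P (i - j) with hB
    have hBn : ‖B‖ ≤ 2 + ∑ j ∈ Finset.range (i + 1), ((j : ℝ) + 1) * (2 * T) * 2 := by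
      refine (norm_sub_le _ _).trans (add_le_add (hPc _) ((norm_sum_le _ _).trans (Finset.sum_le_sum ?_)))
      intro j _
      rw [norm_mul, norm_mul]
      have e1 : ‖((j : ℂ) + 1)‖ = (j : ℝ) + 1 := by
        rw [show ((j : ℂ) + 1) = ((j + 1 : ℕ) : ℂ) by push_cast; rfl, Complex.norm_natCast]; push_cast; rfl
      rw [e1]
      have := hPc (i - j)
      have := hpc (j + 1)
      gcongr
    have key := hC i hi t h (coef p (i + 1)) B
      (coef (fun z => h * P z + p (kap (fun z => h * P z) z)) (i + 1) - coef p (i + 1) - h * B) ht hq0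
      (by linarith) (hpc _) hBn (step_coef hp hpT hP hP0 hq0 hh1 i)
    have e2 : coef p (i + 1) + h * B +
      (coef (fun z => h * P z + p (kap (fun z => h * P z) z)) (i + 1) - coef p (i + 1) - h * B) =
      coef (fun z => h * P z + p (kap (fun z => h * P z) z)) (i + 1) := by ring
    rw [e2] at key
    exact key
  have hf := first_order n (coef p) hP hP0 (t + h) (by linarith)
  have h3 := mul_nonpos_of_nonneg_of_nonpos hq0.le hf
  have h4 : S * h ^ 2 ≤ ε * h := by nlinarith
  linarith

end Step2


section Compactness
open Filter Topology

theorem compactness (f : ℕ → ℂ → ℂ) (hf : ∀ m, HolD (f m)) (C : ℝ) (hC : ∀ m k, ‖coef (f m) k‖ ≤ C) :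
    ∃ (g : ℂ → ℂ) (φ : ℕ → ℕ), HolD g ∧ StrictMono φ ∧
      (∀ k, Tendsto (fun m => coef (f (φ m)) k) atTop (𝓝 (coef g k))) ∧
      (∀ (u : ℕ → ℂ) (z : ℂ), ‖z‖ < 1 → Tendsto u atTop (𝓝 z) →
        Tendsto (fun m => f (φ m) (u m)) atTop (𝓝 (g z))) := by
  have hC0 : 0 ≤ C := (norm_nonneg _).trans (hC 0 0)
  have hK : IsCompact (Set.pi univ (fun _ : ℕ => closedBall (0 : ℂ) C)) :=
    isCompact_univ_pi (fun _ => isCompact_closedBall _ _)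
  obtain ⟨a, ha, φ, hφ, hlim⟩ := hK.tendsto_subseq (x := fun m => coef (f m)) (fun m => by
    intro k _; simpa using hC m k)
  have hlimk : ∀ k, Tendsto (fun m => coef (f (φ m)) k) atTop (𝓝 (a k)) := fun k =>
    (tendsto_pi_nhds.1 hlim) k
  have hak : ∀ k, ‖a k‖ ≤ C := fun k => by simpa using ha k (mem_univ k)
  set g : ℂ → ℂ := fun z => ∑' k, a k * z ^ k with hg
  have hsummable : ∀ r : ℝ, 0 ≤ r → r < 1 → Summable (fun k : ℕ => C * r ^ k) := fun r h0 h1 =>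
    (summable_geometric_of_lt_one h0 h1).mul_left C
  have hgr : ∀ r : ℝ, 0 ≤ r → r < 1 → DifferentiableOn ℂ g (ball 0 r) := by
    intro r h0 h1
    apply Complex.differentiableOn_tsum_of_summable_norm (hsummable r h0 h1)
    · intro k
      exact (Differentiable.differentiableOn (by fun_prop))
    · exact isOpen_ball
    · intro k w hw
      rw [norm_mul, norm_pow]
      have := hak k
      have : ‖w‖ ≤ r := by simpa using (mem_ball_zero_iff.1 hw).le
      gcongr
  have hgH : HolD g := by
    intro z hz
    have hz' : ‖z‖ < 1 := by simpa using hz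
    obtain ⟨r, hr1, hr2⟩ := exists_between hz'
    exact ((hgr r ((norm_nonneg z).trans hr1.le) hr2).differentiableAt
      (isOpen_ball.mem_nhds (by simpa using hr1))).differentiableWithinAt
  have hconv : ∀ (u : ℕ → ℂ) (z : ℂ), ‖z‖ < 1 → Tendsto u atTop (𝓝 z) →
        Tendsto (fun m => f (φ m) (u m)) atTop (𝓝 (g z)) := by
    intro u z hz hu
    obtain ⟨r, hr1, hr2⟩ := exists_between hz
    have hr0 : 0 ≤ r := (norm_nonneg z).trans hr1.le
    have hev : ∀ᶠ m in atTop, ‖u m‖ < r := (hu.norm).eventually_lt_const hr1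
    have := tendsto_tsum_of_dominated_convergence (f := fun m k => coef (f (φ m)) k * u m ^ k)
      (g := fun k => a k * z ^ k) (𝓕 := atTop) (hsummable r hr0 hr2)
      (fun k => (hlimk k).mul (hu.pow k)) (by
        filter_upwards [hev] with m hm k
        rw [norm_mul, norm_pow]
        have := hC (φ m) k
        gcongr)
    refine this.congr' ?_
    filter_upwards [hev] with m hm
    exact (coef_hasSum (hf (φ m)) (hm.trans hr2)).tsum_eq
  refine ⟨g, φ, hgH, hφ, ?_, hconv⟩
  intro k
  have hS : Tendsto (fun m => ∑' j : ℕ, ‖coef (f (φ m)) j - a j‖ * (1/2) ^ j) atTop (𝓝 (∑' j : ℕ, (0 : ℝ))) := by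
    apply tendsto_tsum_of_dominated_convergence (bound := fun j : ℕ => (2 * C) * (1/2) ^ j)
    · exact (summable_geometric_of_lt_one (by norm_num) (by norm_num)).mul_left _
    · intro j
      have h1 : Tendsto (fun m => ‖coef (f (φ m)) j - a j‖) atTop (𝓝 ‖a j - a j‖) :=
        ((hlimk j).sub_const _).norm
      simpa using h1.mul_const ((1/2 : ℝ) ^ j)
    · filter_upwards with m j
      rw [norm_mul, norm_norm, Real.norm_of_nonneg (by positivity)]
      have := hC (φ m) j
      have := hak j
      have := norm_sub_le (coef (f (φ m)) j) (a j)
      gcongr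
      linarith
  rw [tsum_zero] at hS
  have hb : ∀ m, ‖coef (f (φ m)) k - coef g k‖ ≤ 
      (∑' j : ℕ, ‖coef (f (φ m)) j - a j‖ * (1/2) ^ j) / (1/2) ^ k := by
    intro m
    rw [← coef_sub (hf _) hgH]
    apply coef_norm_le (DifferentiableOn.sub (hf (φ m)) hgH) (by norm_num) (by norm_num)
    intro z hz
    have s1 := coef_hasSum (hf (φ m)) (z := z) (by rw [hz]; norm_num)
    have s2 : HasSum (fun k => a k * z ^ k) (g z) := by
      apply Summable.hasSum
      apply Summable.of_norm_bounded (hsummable (1/2) (by norm_num) (by norm_num))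
      intro j
      rw [norm_mul, norm_pow, hz]
      have := hak j
      gcongr
    have s3 := s1.sub s2
    show ‖f (φ m) z - g z‖ ≤ _
    rw [← s3.tsum_eq]
    apply tsum_of_norm_bounded (Summable.hasSum _)
    · intro j
      rw [← sub_mul, norm_mul, norm_pow, hz]
    · apply Summable.of_nonneg_of_le (fun j => by positivity) (f := fun j : ℕ => (2 * C) * (1/2) ^ j)
      · intro j
        have := hC (φ m) j
        have := hak j
        have := norm_sub_le (coef (f (φ m)) j) (a j)
        gcongr
        linarith
      · exact (summable_geometric_of_lt_one (by norm_num) (by norm_num)).mul_left _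
  rw [tendsto_iff_norm_sub_tendsto_zero]
  refine squeeze_zero (fun _ => norm_nonneg _) hb ?_
  simpa using hS.div_const ((1/2 : ℝ) ^ k)

theorem coef_le_of_bounded {f : ℂ → ℂ} (hf : HolD f) {C : ℝ} (hC : ∀ z : ℂ, ‖z‖ < 1 → ‖f z‖ ≤ C) (k : ℕ) :
    ‖coef f k‖ ≤ C := by
  have h1 : Tendsto (fun r : ℝ => C / r ^ k) (𝓝[<] 1) (𝓝 (C / 1 ^ k)) := by
    apply Tendsto.mono_left _ nhdsWithin_le_nhds
    apply ContinuousAt.tendsto (f := fun r : ℝ => C / r ^ k)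
    apply ContinuousAt.div continuousAt_const (by fun_prop) (by simp)
  rw [one_pow, div_one] at h1
  refine ge_of_tendsto h1 ?_
  filter_upwards [Ioo_mem_nhdsLT (show (0:ℝ) < 1 by norm_num)] with r hr
  exact coef_norm_le hf hr.1 hr.2 (fun z hz => hC z (by rw [hz]; exact hr.2)) k

/-- holomorphic self-maps of the disc fixing the origin -/
structure Sm (f : ℂ → ℂ) : Prop where
  hol : HolD f
  lt : ∀ z : ℂ, ‖z‖ < 1 → ‖f z‖ < 1
  zero : f 0 = 0

theorem schwarz_le {f : ℂ → ℂ} (hf : HolD f) (h : ∀ z : ℂ, ‖z‖ < 1 → ‖f z‖ ≤ 1) (h0 : f 0 = 0)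
    {z : ℂ} (hz : ‖z‖ < 1) : ‖f z‖ ≤ ‖z‖ :=
  Complex.norm_le_norm_of_mapsTo_ball hf (fun w hw => by
    simpa using h w (by simpa using hw)) h0 hz

theorem Sm.le {f : ℂ → ℂ} (h : Sm f) {z : ℂ} (hz : ‖z‖ < 1) : ‖f z‖ ≤ ‖z‖ :=
  schwarz_le h.hol (fun w hw => (h.lt w hw).le) h.zero hz

theorem sm_of_le {f : ℂ → ℂ} (hf : HolD f) (h : ∀ z : ℂ, ‖z‖ < 1 → ‖f z‖ ≤ ‖z‖) : Sm f :=
  ⟨hf, fun z hz => (h z hz).trans_lt hz, by simpa using h 0 (by simp)⟩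

theorem Zc.kap_sm {p : ℂ → ℂ} (h : Zc p) : Sm (kap p) := sm_of_le h.kap_hol (fun _ hz => h.kap_norm hz)

theorem Sm.comp {f g : ℂ → ℂ} (hf : Sm f) (hg : Sm g) : Sm (fun z => f (g z)) :=
  ⟨hf.hol.comp hg.hol hg.lt, fun z hz => hf.lt _ (hg.lt z hz), by rw [hg.zero, hf.zero]⟩

theorem factor_limit (φ : ℂ → ℂ) (p ψ : ℕ → ℂ → ℂ) (ρ : ℕ → ℂ) (T : ℝ) (hp : ∀ m, Zc (p m))
    (hT : ∀ m, (p m 0).re ≤ T) (hψ : ∀ m, Sm (ψ m)) (hρ : Tendsto ρ atTop (𝓝 1))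
    (hφ : ∀ z : ℂ, ‖z‖ < 1 → ∀ᶠ m in atTop, φ z = kap (p m) (ρ m * ψ m z)) :
    ∃ (q χ : ℂ → ℂ) (σ : ℕ → ℕ), Zc q ∧ Sm χ ∧ StrictMono σ ∧
      (∀ k, Tendsto (fun m => coef (p (σ m)) k) atTop (𝓝 (coef q k))) ∧
      ∀ z : ℂ, ‖z‖ < 1 → φ z = kap q (χ z) := by
  obtain ⟨q, σ, hq, hσ, hqc, hqv⟩ := compactness p (fun m => (hp m).hol) (2 * T)
    (fun m k => (hp m).coef_le (hT m) k)
  obtain ⟨χ, ν, hχ, hν, -, hχv⟩ := compactness (fun m => ψ (σ m)) (fun m => (hψ _).hol) 1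
    (fun m k => coef_le_of_bounded (hψ _).hol (fun z hz => ((hψ _).lt z hz).le) k)
  have hχs : Sm χ := by
    apply sm_of_le hχ
    intro z hz
    have := (hχv (fun _ => z) z hz tendsto_const_nhds).norm
    exact le_of_tendsto this (Eventually.of_forall (fun m => (hψ _).le hz))
  have hq0 : ∀ z : ℂ, ‖z‖ < 1 → Tendsto (fun m => p (σ m) z) atTop (𝓝 (q z)) := fun z hz =>
    hqv (fun _ => z) z hz tendsto_const_nhds
  have hqZ : Zc q := ⟨hq, fun z hz => ge_of_tendsto ((Complex.continuous_re.tendsto _).comp (hq0 z hz))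
      (Eventually.of_forall (fun m => (hp _).re z hz)), by
      have h1 := (Complex.continuous_im.tendsto _).comp (hq0 0 (by simp))
      refine tendsto_nhds_unique h1 ?_
      refine tendsto_const_nhds.congr (fun m => ?_)
      exact ((hp _).im).symm⟩
  refine ⟨q, χ, σ, hqZ, hχs, hσ, hqc, ?_⟩
  intro z hz
  have t1 : Tendsto (fun m => ρ (σ (ν m)) * ψ (σ (ν m)) z) atTop (𝓝 (χ z)) := by
    have := (hρ.comp (hσ.comp hν).tendsto_atTop).mul (hχv (fun _ => z) z hz tendsto_const_nhds)
    simpa using this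
  classical
  -- extend the sequence along the whole index set
  obtain ⟨q', τ, hq', hτ, hqc', hqv'⟩ := compactness (fun m => p (σ (ν m))) (fun m => (hp _).hol) (2 * T)
    (fun m k => (hp _).coef_le (hT _) k)
  have e1 : ∀ w : ℂ, ‖w‖ < 1 → q' w = q w := by
    intro w hw
    exact tendsto_nhds_unique (hqv' (fun _ => w) w hw tendsto_const_nhds)
      ((hq0 w hw).comp (hν.comp hτ).tendsto_atTop)
  have t2 := hqv' (fun m => ρ (σ (ν (τ m))) * ψ (σ (ν (τ m))) z) (χ z) (hχs.lt z hz)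
    (t1.comp hτ.tendsto_atTop)
  rw [e1 _ (hχs.lt z hz)] at t2
  have t3 : Tendsto (fun m => kap (p (σ (ν (τ m)))) (ρ (σ (ν (τ m))) * ψ (σ (ν (τ m))) z)) atTop
      (𝓝 (kap q (χ z))) :=
    (t1.comp hτ.tendsto_atTop).mul ((Complex.continuous_exp.tendsto _).comp t2.neg)
  refine tendsto_nhds_unique (tendsto_const_nhds.congr' ?_) t3
  have := (hσ.comp (hν.comp hτ)).tendsto_atTop.eventually (hφ z hz)
  exact this

end Compactness


section Koebe
open Filter Topology ComplexConjugate

/-- logarithms in the disc -/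
theorem log_exists {f : ℂ → ℂ} (hf : HolD f) (h0 : ∀ z : ℂ, ‖z‖ < 1 → f z ≠ 0) :
    ∃ L : ℂ → ℂ, HolD L ∧ (∀ z : ℂ, ‖z‖ < 1 → Complex.exp (L z) = f z) ∧
      ∀ z : ℂ, ‖z‖ < 1 → HasDerivAt L (deriv f z / f z) z := by
  have hd : HolD (fun z => deriv f z / f z) := DifferentiableOn.div hf.deriv hf (fun z hz => h0 z (by simpa using hz))
  obtain ⟨L, hL0, hL⟩ := (DifferentiableOn.isExactOn_ball hd).with_val_at 0 (Complex.log (f 0))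
  have hL' : ∀ z : ℂ, ‖z‖ < 1 → HasDerivAt L (deriv f z / f z) z := fun z hz => hL z (by simpa using hz)
  refine ⟨L, fun z hz => (hL z hz).differentiableAt.differentiableWithinAt, ?_, hL'⟩
  have hconst : ∀ z ∈ ball (0:ℂ) 1, HasDerivWithinAt (fun z => f z * Complex.exp (-L z)) 0 (ball (0:ℂ) 1) z := by
    intro z hz
    have hz' : ‖z‖ < 1 := by simpa using hz
    have h1 := (hf.differentiableAt hz').hasDerivAt.mul ((hL z hz).neg.cexp)
    refine (h1.congr_deriv ?_).hasDerivWithinAt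
    field_simp [h0 z hz']
    ring
  intro z hz
  have := (convex_ball (0:ℂ) 1).is_const_of_fderivWithin_eq_zero (𝕜 := ℂ) (f := fun z => f z * Complex.exp (-L z))
    (fun z hz => (hconst z hz).differentiableWithinAt) (fun z hz => by
      have := (hconst z hz).hasFDerivWithinAt.fderivWithin (isOpen_ball.uniqueDiffWithinAt hz)
      rw [this]; simp) (x := z) (y := 0) (by simpa using hz) (by simp)
  simp only [hL0] at this
  rw [Complex.exp_neg, Complex.exp_neg, Complex.exp_log (h0 0 (by simp)), mul_inv_cancel₀ (h0 0 (by simp))] at this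
  rw [← div_eq_mul_inv, div_eq_one_iff_eq (Complex.exp_ne_zero _)] at this
  exact this.symm

theorem inv_exists {f : ℂ → ℂ} (hf : HolD f) (hinj : InjOn f (ball 0 1))
    (hd : ∀ z : ℂ, ‖z‖ < 1 → deriv f z ≠ 0) :
    ∃ g : ℂ → ℂ, ∀ z : ℂ, ‖z‖ < 1 → g (f z) = z ∧ HasDerivAt g (deriv f z)⁻¹ (f z) := by
  have hl : ∀ z : ℂ, ‖z‖ < 1 → Function.invFunOn f (ball 0 1) (f z) = z := fun z hz =>
    hinj.leftInvOn_invFunOn (by simpa using hz)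
  refine ⟨Function.invFunOn f (ball 0 1), fun z hz => ⟨hl z hz, ?_⟩⟩
  have hs : HasStrictDerivAt f (deriv f z) z := (hf.analyticAt hz).hasStrictDerivAt
  have hmap := hs.map_nhds_eq (hd z hz)
  have hev : ∀ᶠ w in 𝓝 z, ‖w‖ < 1 := (continuous_norm.tendsto z).eventually_lt_const hz
  apply HasDerivAt.of_local_left_inverse
  · rw [ContinuousAt, hl z hz, ← hmap, tendsto_map'_iff]
    refine tendsto_id.congr' ?_
    filter_upwards [hev] with w hw
    simp [hl w hw]
  · rw [hl z hz]; exact hs.hasDerivAt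
  · exact hd z hz
  · rw [← hmap, eventually_map]
    filter_upwards [hev] with w hw
    rw [hl w hw]

theorem escape {f : ℂ → ℂ} (hf : Sm f) (hinj : InjOn f (ball 0 1))
    (hd : ∀ z : ℂ, ‖z‖ < 1 → deriv f z ≠ 0) (hlt : ‖deriv f 0‖ < 1) (η : ℝ) (hη : η < 1) :
    ∃ a : ℂ, η < ‖a‖ ∧ ‖a‖ < 1 ∧ ∀ z : ℂ, ‖z‖ < 1 → f z ≠ a := by
  by_contra! hcon
  obtain ⟨g, hg⟩ := inv_exists hf.hol hinj hd
  have hsurj : ∀ b : ℂ, ‖b‖ < 1 → ∃ z : ℂ, ‖z‖ < 1 ∧ f z = b := by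
    intro b hb
    by_contra! hb'
    obtain ⟨L, -, -, hL⟩ := log_exists (f := fun z => f z - b) (hf.hol.sub_const b)
      (fun z hz => sub_ne_zero.2 (hb' z hz))
    obtain ⟨R, hR1, hR2⟩ := exists_between (max_lt hη hb)
    have hRη : η < R := (le_max_left _ _).trans_lt hR1
    have hRb : ‖b‖ < R := (le_max_right _ _).trans_lt hR1
    have hR0 : 0 < R := (norm_nonneg b).trans_lt hRb
    have h1 : (∮ w in C(0, R), (w - b)⁻¹) = 0 := by
      apply circleIntegral.integral_eq_zero_of_hasDerivWithinAt (f := fun w => L (g w)) hR0.le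
      intro w hw
      have hw' : ‖w‖ = R := by simpa using hw
      obtain ⟨z, hz, rfl⟩ := hcon w (by rw [hw']; exact hRη) (by rw [hw']; exact hR2)
      obtain ⟨g1, g2⟩ := hg z hz
      have hLz := hL z hz
      rw [deriv_sub_const] at hLz
      rw [← g1] at hLz
      refine ((hLz.comp (f z) g2).congr_deriv ?_).hasDerivWithinAt
      rw [g1]
      have := hd z hz
      have := sub_ne_zero.2 (hb' z hz)
      field_simp
    rw [circleIntegral.integral_sub_inv_of_mem_ball (by simpa using hRb)] at h1
    simp [Real.pi_ne_zero] at h1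
  have g0 : g 0 = 0 := by
    have := (hg 0 (by simp)).1
    rwa [hf.zero] at this
  have h2 : ‖deriv g 0‖ ≤ 1 := by
    apply Complex.norm_deriv_le_one_of_mapsTo_ball (R := 1) (f := g) (c := 0) _ _ one_pos
    · intro w hw
      obtain ⟨z, hz, rfl⟩ := hsurj w (by simpa using hw)
      exact (hg z hz).2.differentiableAt.differentiableWithinAt
    · intro w hw
      obtain ⟨z, hz, rfl⟩ := hsurj w (by simpa using hw)
      rw [(hg z hz).1, g0]; simpa using hz.le
  have h3 := (hg 0 (by simp)).2
  rw [hf.zero] at h3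
  rw [h3.deriv, norm_inv] at h2
  have h4 : 0 < ‖deriv f 0‖ := norm_pos_iff.2 (hd 0 (by simp))
  rw [inv_le_one₀ h4] at h2
  linarith

theorem one_sub_ne {a z : ℂ} (ha : ‖a‖ < 1) (hz : ‖z‖ < 1) : 1 - a * z ≠ 0 := by
  intro h
  have h1 : a * z = 1 := (sub_eq_zero.1 h).symm
  have h2 : ‖a * z‖ = 1 := by rw [h1]; simp
  rw [norm_mul] at h2
  nlinarith [norm_nonneg a, norm_nonneg z]

theorem moebius_lt {a z : ℂ} (ha : ‖a‖ < 1) (hz : ‖z‖ < 1) : ‖(z - a) / (1 - conj a * z)‖ < 1 := by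
  have hne : 1 - conj a * z ≠ 0 := one_sub_ne (by simpa using ha) hz
  rw [norm_div, div_lt_one (norm_pos_iff.2 hne), ← sq_lt_sq₀ (norm_nonneg _) (norm_nonneg _),
    ← Complex.normSq_eq_norm_sq, ← Complex.normSq_eq_norm_sq]
  have e : Complex.normSq (1 - conj a * z) - Complex.normSq (z - a) =
      (1 - Complex.normSq a) * (1 - Complex.normSq z) := by
    simp [Complex.normSq_apply]; ring
  have h1 : Complex.normSq a < 1 := by
    rw [Complex.normSq_eq_norm_sq]; nlinarith [norm_nonneg a]
  have h2 : Complex.normSq z < 1 := by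
    rw [Complex.normSq_eq_norm_sq]; nlinarith [norm_nonneg z]
  nlinarith

/-- degree two Blaschke product -/
def KB (β : ℝ) (v w : ℂ) : ℂ := w * ((β + v * w) / (1 + β * v * w))

theorem koebe_alg {c c' s ψ : ℂ} (h1 : 1 - c' * s ≠ 0) (h2 : 1 + c' * s ≠ 0) (h3 : 1 - c * c' ≠ 0)
    (h4 : 1 + c * c' ≠ 0) (h : s ^ 2 * (1 + c' ^ 2 * ψ) = ψ + c ^ 2) :
    ψ = ((s - c) / (1 - c' * s)) * ((2 * c / (1 + c * c') + (s - c) / (1 - c' * s)) /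
      (1 + 2 * c' / (1 + c * c') * ((s - c) / (1 - c' * s)))) := by
  have e1 : 2 * c / (1 + c * c') + (s - c) / (1 - c' * s) =
      (1 - c * c') * (s + c) / ((1 + c * c') * (1 - c' * s)) := by
    field_simp; ring
  have e2 : 1 + 2 * c' / (1 + c * c') * ((s - c) / (1 - c' * s)) =
      (1 - c * c') * (1 + c' * s) / ((1 + c * c') * (1 - c' * s)) := by
    rw [div_mul_div_comm, one_add_div (mul_ne_zero h4 h1)]
    congr 1; ring
  rw [e1, e2]
  have e3 : (1 - c * c') * (s + c) / ((1 + c * c') * (1 - c' * s)) / ((1 - c * c') * (1 + c' * s) /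
      ((1 + c * c') * (1 - c' * s))) = (s + c) / (1 + c' * s) := by
    field_simp
  rw [e3, div_mul_div_comm, eq_div_iff (mul_ne_zero h1 h2)]
  linear_combination -h

theorem koebe_step {ψ : ℂ → ℂ} (hψ : Sm ψ) {a : ℂ} {η : ℝ} (hη : 0 ≤ η) (ha : η < ‖a‖) (ha1 : ‖a‖ < 1)
    (hψa : ∀ z : ℂ, ‖z‖ < 1 → ψ z ≠ a) :
    ∃ (β : ℝ) (v : ℂ) (χ : ℂ → ℂ), η < β ∧ β < 1 ∧ ‖v‖ = 1 ∧ Sm χ ∧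
      ∀ z : ℂ, ‖z‖ < 1 → ψ z = KB β v (χ z) := by
  have hac : ‖conj a‖ < 1 := by simpa using ha1
  have hne : ∀ z : ℂ, ‖z‖ < 1 → 1 - conj a * ψ z ≠ 0 := fun z hz => one_sub_ne hac (hψ.lt z hz)
  set f : ℂ → ℂ := fun z => (ψ z - a) / (1 - conj a * ψ z) with hf
  have hfH : HolD f := DifferentiableOn.div (hψ.hol.sub_const a) ((hψ.hol.const_mul _).const_sub 1)
    (fun z hz => hne z (by simpa using hz))
  obtain ⟨L, hLH, hL, -⟩ := log_exists hfH (fun z hz => div_ne_zero (sub_ne_zero.2 (hψa z hz)) (hne z hz))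
  set s : ℂ → ℂ := fun z => Complex.exp (2⁻¹ * L z) with hs
  have hsH : HolD s := DifferentiableOn.cexp (hLH.const_mul _)
  have hs2 : ∀ z : ℂ, ‖z‖ < 1 → s z ^ 2 = f z := by
    intro z hz
    rw [← hL z hz, hs, sq, ← Complex.exp_add]
    congr 1; ring
  have hs1 : ∀ z : ℂ, ‖z‖ < 1 → ‖s z‖ < 1 := by
    intro z hz
    have h1 : ‖f z‖ < 1 := moebius_lt ha1 (hψ.lt z hz)
    rw [← hs2 z hz, norm_pow] at h1
    nlinarith [norm_nonneg (s z)]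
  set c := s 0 with hc
  have hc1 : ‖c‖ < 1 := hs1 0 (by simp)
  have hc0 : c ≠ 0 := Complex.exp_ne_zero _
  have hcn : 0 < ‖c‖ := norm_pos_iff.2 hc0
  have hca : c ^ 2 = - a := by rw [hc, hs2 0 (by simp), hf]; simp [hψ.zero]
  have hcna : ‖c‖ ^ 2 = ‖a‖ := by rw [← norm_pow, hca, norm_neg]
  have hcc : c * conj c = ((‖c‖ ^ 2 : ℝ) : ℂ) := by
    rw [Complex.mul_conj, Complex.normSq_eq_norm_sq]
  set m := ‖c‖ with hm
  set β : ℝ := 2 * m / (1 + m ^ 2) with hβ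
  have hmc : (m : ℂ) ≠ 0 := by exact_mod_cast hcn.ne'
  set u : ℂ := c / m with hu
  have hun : ‖u‖ = 1 := by
    rw [hu, norm_div, Complex.norm_real, Real.norm_of_nonneg hcn.le, ← hm, div_self hcn.ne']
  have huu : conj u * u = 1 := by
    rw [mul_comm, Complex.mul_conj, Complex.normSq_eq_norm_sq, hun]; simp
  have hcm : ‖conj c‖ < 1 := by simpa using hc1
  set w : ℂ → ℂ := fun z => (s z - c) / (1 - conj c * s z) with hw
  have hwH : HolD w := DifferentiableOn.div (hsH.sub_const c) ((hsH.const_mul _).const_sub 1)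
    (fun z hz => one_sub_ne hcm (hs1 z (by simpa using hz)))
  refine ⟨β, conj u ^ 2, fun z => u * w z, ?_, ?_, ?_, ⟨hwH.const_mul _, ?_, ?_⟩, ?_⟩
  · rw [hβ, lt_div_iff₀ (by positivity)]
    nlinarith
  · rw [hβ, div_lt_one (by positivity)]
    nlinarith
  · simp [hun]
  · intro z hz
    rw [norm_mul, hun, one_mul]
    exact moebius_lt hc1 (hs1 z hz)
  · simp [hw, hc]
  · intro z hz
    have hm1 : (1 : ℂ) + m ^ 2 ≠ 0 := by
      have : (1 : ℝ) + m ^ 2 ≠ 0 := by positivity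
      exact_mod_cast this
    have hm2 : (1 : ℂ) - m ^ 2 ≠ 0 := by
      have : (1 : ℝ) - m ^ 2 ≠ 0 := by nlinarith
      exact_mod_cast this
    have hcc' : c * conj c = (m : ℂ) ^ 2 := by rw [hcc]; push_cast; rfl
    have key := koebe_alg (c := c) (c' := conj c) (s := s z) (ψ := ψ z)
      (one_sub_ne hcm (hs1 z hz))
      (by
        have := one_sub_ne (a := -conj c) (by simpa using hc1) (hs1 z hz)
        intro h; apply this; rw [← h]; ring)
      (by rw [hcc']; exact hm2) (by rw [hcc']; exact hm1)
      (by
        rw [hs2 z hz, hf, ← map_pow, hca]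
        simp only [map_neg]
        rw [show 1 + -conj a * ψ z = 1 - conj a * ψ z by ring, div_mul_cancel₀ _ (hne z hz)]
        ring)
    rw [key, hcc']
    have hb : (2 * c / (1 + (m : ℂ) ^ 2)) = u * β := by
      rw [hu, hβ]; push_cast; field_simp
    have hb' : (2 * conj c / (1 + (m : ℂ) ^ 2)) = conj u * β := by
      rw [hu, hβ]; simp only [map_div₀, Complex.conj_ofReal]; push_cast; field_simp
    rw [hb, hb']
    show w z * ((u * β + w z) / (1 + conj u * β * w z)) = KB β (conj u ^ 2) (u * w z)
    rw [KB]
    have e1 : (β : ℂ) * conj u ^ 2 * (u * w z) = conj u * β * w z := by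
      linear_combination (β * conj u * w z) * huu
    have e2 : conj u ^ 2 * (u * w z) = conj u * w z := by
      linear_combination (conj u * w z) * huu
    rw [e1, e2, mul_comm u (w z), mul_assoc (w z) u, ← mul_div_assoc u]
    congr 2
    linear_combination (-w z) * huu

end Koebe


section Sup
open Filter Topology ComplexConjugate

theorem blaschke_lt {β : ℝ} (h0 : 0 < β) (h1 : β < 1) {x : ℂ} (hx : ‖x‖ < 1) :
    ‖(β + x) / (1 + β * x)‖ < 1 ∧ (1 + β * x : ℂ) ≠ 0 := by
  have hb : ‖(-β : ℂ)‖ < 1 := by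
    rw [norm_neg, Complex.norm_real, Real.norm_of_nonneg h0.le]; exact h1
  constructor
  · have := moebius_lt hb hx
    simp only [map_neg, Complex.conj_ofReal] at this
    rwa [show (β + x) / (1 + β * x) = (x - -β) / (1 - -β * x) by ring_nf]
  · have := one_sub_ne hb hx
    intro h; apply this; rw [← h]; ring

theorem KB_sm {β : ℝ} (h0 : 0 < β) (h1 : β < 1) {v : ℂ} (hv : ‖v‖ = 1) : Sm (KB β v) := by
  have hvw : ∀ w : ℂ, ‖w‖ < 1 → ‖v * w‖ < 1 := fun w hw => by rw [norm_mul, hv, one_mul]; exact hw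
  apply sm_of_le
  · apply DifferentiableOn.mul differentiableOn_id
    apply DifferentiableOn.div (Differentiable.differentiableOn (by fun_prop))
      (Differentiable.differentiableOn (by fun_prop))
    intro w hw
    have := (blaschke_lt h0 h1 (hvw w (by simpa using hw))).2
    rwa [← mul_assoc] at this
  · intro w hw
    rw [KB, norm_mul]
    apply mul_le_of_le_one_right (norm_nonneg _)
    have := (blaschke_lt h0 h1 (hvw w hw)).1.le
    rwa [← mul_assoc] at this

theorem KB_zc {β ρ : ℝ} (hρ : 0 < ρ) (hρβ : ρ < β) (h1 : β < 1) {v : ℂ} (hv : ‖v‖ = 1) :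
    ∃ r : ℂ → ℂ, Zc r ∧ (r 0).re = - Real.log β ∧ ∀ w : ℂ, ‖w‖ < 1 → KB β v (ρ * w) = ρ * kap r w := by
  have h0 : 0 < β := hρ.trans hρβ
  have hx : ∀ w : ℂ, ‖w‖ < 1 → ‖v * (ρ * w)‖ < ρ := fun w hw => by
    rw [norm_mul, norm_mul, hv, one_mul, Complex.norm_real, Real.norm_of_nonneg hρ.le]
    nlinarith
  have hB : ∀ w : ℂ, ‖w‖ < 1 → _ := fun w hw => blaschke_lt h0 h1 ((hx w hw).trans (hρβ.trans h1))
  set N : ℂ → ℂ := fun w => (β + v * (ρ * w)) / (1 + β * (v * (ρ * w))) with hN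
  have hNH : HolD N := DifferentiableOn.div (Differentiable.differentiableOn (by fun_prop))
      (Differentiable.differentiableOn (by fun_prop)) (fun w hw => (hB w (by simpa using hw)).2)
  have hNre : ∀ w : ℂ, ‖w‖ < 1 → 0 < (N w).re := by
    intro w hw
    have h3 := hx w hw
    have h2 := (hB w hw).2
    simp only [hN]
    set x := v * (ρ * w)
    have e1 : (β + x) / (1 + β * x) = ((β + x) * conj (1 + β * x)) * ((Complex.normSq (1 + β * x))⁻¹ : ℝ) := by
      rw [div_eq_mul_inv, Complex.inv_def]; ring
    rw [e1, Complex.re_mul_ofReal]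
    apply mul_pos _ (inv_pos.2 (Complex.normSq_pos.2 h2))
    have e2 : ((β + x) * conj (1 + β * x)).re = β + (1 + β ^ 2) * x.re + β * ‖x‖ ^ 2 := by
      rw [← Complex.normSq_eq_norm_sq, Complex.normSq_apply]
      simp; ring
    rw [e2]
    have h4 := (abs_le.1 (Complex.abs_re_le_norm x)).1
    have h5 : 0 < (β - ‖x‖) * (1 - β * ‖x‖) := by
      apply mul_pos (by linarith)
      nlinarith [norm_nonneg x]
    nlinarith [sq_nonneg β]
  have hN0 : N 0 = β := by simp [hN]
  have hlog0 : Complex.log (N 0) = (Real.log β : ℂ) := by rw [hN0, Complex.ofReal_log h0.le]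
  refine ⟨fun w => - Complex.log (N w), ⟨?_, ?_, ?_⟩, ?_, ?_⟩
  · apply DifferentiableOn.neg
    apply DifferentiableOn.clog hNH
    intro w hw
    exact Or.inl (hNre w (by simpa using hw))
  · intro w hw
    rw [Complex.neg_re, Complex.log_re]
    have := Real.log_nonpos (norm_nonneg _) (hB w hw).1.le
    simp only [hN]; linarith
  · show (-Complex.log (N 0)).im = _
    rw [hlog0]; simp
  · show (-Complex.log (N 0)).re = _
    rw [hlog0]; simp
  · intro w hw
    have hne : N w ≠ 0 := by
      intro h; have := hNre w hw; rw [h] at this; simp at this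
    rw [kap, neg_neg, Complex.exp_log hne, KB, hN]
    simp only []
    ring_nf

theorem Mf_zero (n : ℕ) (t : ℝ) (ht : 0 ≤ t) : Mf n (fun _ => 0) t ≤ 0 := by
  rw [Mf]
  apply Finset.sum_nonpos
  intro i _
  apply mul_nonpos_of_nonneg_of_nonpos (tau_nonneg _ _ _ ht)
  have : coef (fun _ => 0) (i + 1) = 0 := by simp [coef]
  rw [this]
  have : (0:ℝ) ≤ 4 / (i + 1) := by positivity
  simpa using this

theorem deriv_of_scaled {Q q : ℂ → ℂ} {ρ : ℝ} (hρ : 0 < ρ) (hQ : HolD Q) (hq : Zc q)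
    (h : ∀ w : ℂ, ‖w‖ < 1 → Q (ρ * w) = ρ * kap q w) : deriv Q 0 = Real.exp (-(q 0).re) := by
  have h1 : HasDerivAt (fun w : ℂ => Q (ρ * w)) (deriv Q 0 * (ρ * 1)) 0 := by
    have a := (hQ.differentiableAt (z := 0) (by simp)).hasDerivAt
    have b : HasDerivAt (fun w : ℂ => (ρ : ℂ) * w) (ρ * 1) 0 := (hasDerivAt_id (0:ℂ)).const_mul (ρ : ℂ)
    have a' : HasDerivAt Q (deriv Q 0) ((ρ : ℂ) * 0) := by rwa [mul_zero]
    exact a'.comp 0 b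
  have h2 : HasDerivAt (fun w : ℂ => ρ * kap q w) (ρ * (1 * Complex.exp (-q 0) + 0 * (Complex.exp (-q 0) * -deriv q 0))) 0 := by
    have a := (hq.hol.differentiableAt (z := 0) (by simp)).hasDerivAt
    exact ((hasDerivAt_id (0:ℂ)).mul (a.neg.cexp)).const_mul (ρ : ℂ)
  have h3 : HasDerivAt (fun w : ℂ => Q (ρ * w)) (ρ * (1 * Complex.exp (-q 0) + 0 * (Complex.exp (-q 0) * -deriv q 0))) 0 := by
    apply h2.congr_of_eventuallyEq
    filter_upwards [isOpen_ball.mem_nhds (show (0:ℂ) ∈ ball (0:ℂ) 1 by simp)] with w hw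
    exact h w (by simpa using hw)
  have h4 := h1.unique h3
  have hρc : (ρ : ℂ) ≠ 0 := by exact_mod_cast hρ.ne'
  have h5 : deriv Q 0 = Complex.exp (-q 0) := by
    apply mul_left_cancel₀ hρc
    linear_combination h4
  rw [h5, hq.zero_eq]; push_cast; simp

/-- admissible values -/
def Adm (n : ℕ) (ε ρ : ℝ) (φ : ℂ → ℂ) (x : ℝ) : Prop :=
  ∃ q Q ψ : ℂ → ℂ, Zc q ∧ Sm Q ∧ Sm ψ ∧ (q 0).re = x ∧ (∀ t : ℝ, 0 ≤ t → Mf n q t ≤ ε * x) ∧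
    (∀ w : ℂ, ‖w‖ < 1 → Q (ρ * w) = ρ * kap q w) ∧ ∀ z : ℂ, ‖z‖ < 1 → φ z = Q (ψ z)

theorem adm_zero (n : ℕ) (ε ρ : ℝ) {φ : ℂ → ℂ} (hφ : Sm φ) : Adm n ε ρ φ 0 := by
  refine ⟨fun _ => 0, fun z => z, φ, ⟨differentiableOn_const _, by simp, by simp⟩,
    ⟨holD_id, fun _ h => h, rfl⟩, hφ, by simp, fun t ht => ?_, ?_, fun _ _ => rfl⟩
  · simpa using Mf_zero n t ht
  · intro w _; simp [kap]

theorem chain_at {φ Q ψ : ℂ → ℂ} (hQ : Sm Q) (hψ : Sm ψ) (h : ∀ z : ℂ, ‖z‖ < 1 → φ z = Q (ψ z))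
    {z : ℂ} (hz : ‖z‖ < 1) : deriv φ z = deriv Q (ψ z) * deriv ψ z := by
  have h1 := (hQ.hol.differentiableAt (hψ.lt z hz)).hasDerivAt.comp z (hψ.hol.differentiableAt hz).hasDerivAt
  refine HasDerivAt.deriv (h1.congr_of_eventuallyEq ?_)
  filter_upwards [isOpen_ball.mem_nhds (show z ∈ ball (0:ℂ) 1 by simpa using hz)] with w hw
  exact h w (by simpa using hw)

theorem Sm.deriv_le {ψ : ℂ → ℂ} (hψ : Sm ψ) : ‖deriv ψ 0‖ ≤ 1 :=
  Complex.norm_deriv_le_one_of_mapsTo_ball hψ.hol (fun w hw => by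
    rw [hψ.zero]; simpa using (hψ.lt w (by simpa using hw)).le) one_pos

theorem adm_le {n : ℕ} {ε ρ T x : ℝ} {φ : ℂ → ℂ} (hρ : 0 < ρ) (hT : deriv φ 0 = Real.exp (-T))
    (h : Adm n ε ρ φ x) : x ≤ T := by
  obtain ⟨q, Q, ψ, hq, hQ, hψ, rfl, -, h1, h2⟩ := h
  have h3 := chain_at hQ hψ h2 (z := 0) (by simp)
  rw [hψ.zero, deriv_of_scaled hρ hQ.hol hq h1, hT] at h3
  have h4 := congrArg norm h3
  rw [norm_mul, Complex.norm_real, Complex.norm_real, Real.norm_of_nonneg (Real.exp_pos _).le,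
    Real.norm_of_nonneg (Real.exp_pos _).le] at h4
  have h5 : Real.exp (-T) ≤ Real.exp (-(q 0).re) := by
    rw [h4]; exact mul_le_of_le_one_right (Real.exp_pos _).le hψ.deriv_le
  have := Real.exp_le_exp.1 h5
  linarith

theorem adm_closed {n : ℕ} {ε ρ T : ℝ} {φ : ℂ → ℂ} (hρ : 0 < ρ) (hρ1 : ρ < 1)
    (hT : deriv φ 0 = Real.exp (-T)) : IsClosed {x | Adm n ε ρ φ x} := by
  apply IsSeqClosed.isClosed
  intro x y hx hy
  choose q Q ψ hq hQ hψ hqx hM hQρ hφ using hx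
  have hxT : ∀ m, (q m 0).re ≤ T := fun m => by
    rw [hqx]; exact adm_le hρ hT ⟨q m, Q m, ψ m, hq m, hQ m, hψ m, hqx m, hM m, hQρ m, hφ m⟩
  obtain ⟨ψ', σ1, hψ', hσ1, -, hv1⟩ := compactness ψ (fun m => (hψ _).hol) 1
    (fun m k => coef_le_of_bounded (hψ _).hol (fun z hz => ((hψ _).lt z hz).le) k)
  obtain ⟨Q', σ2, hQ', hσ2, -, hv2⟩ := compactness (fun m => Q (σ1 m)) (fun m => (hQ _).hol) 1
    (fun m k => coef_le_of_bounded (hQ _).hol (fun z hz => ((hQ _).lt z hz).le) k)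
  obtain ⟨q', σ3, hq', hσ3, hc3, hv3⟩ := compactness (fun m => q (σ1 (σ2 m))) (fun m => (hq _).hol) (2 * T)
    (fun m k => (hq _).coef_le (hxT _) k)
  have c1 : ∀ z : ℂ, ‖z‖ < 1 → Tendsto (fun m => ψ (σ1 m) z) atTop (𝓝 (ψ' z)) := fun z hz =>
    hv1 (fun _ => z) z hz tendsto_const_nhds
  have c2 : ∀ z : ℂ, ‖z‖ < 1 → Tendsto (fun m => Q (σ1 (σ2 m)) z) atTop (𝓝 (Q' z)) := fun z hz =>
    hv2 (fun _ => z) z hz tendsto_const_nhds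
  have c3 : ∀ z : ℂ, ‖z‖ < 1 → Tendsto (fun m => q (σ1 (σ2 (σ3 m))) z) atTop (𝓝 (q' z)) := fun z hz =>
    hv3 (fun _ => z) z hz tendsto_const_nhds
  have hψs : Sm ψ' := sm_of_le hψ' (fun z hz =>
    le_of_tendsto (c1 z hz).norm (Eventually.of_forall (fun m => (hψ _).le hz)))
  have hQs : Sm Q' := sm_of_le hQ' (fun z hz =>
    le_of_tendsto (c2 z hz).norm (Eventually.of_forall (fun m => (hQ _).le hz)))
  have hqZ : Zc q' := ⟨hq', fun z hz => ge_of_tendsto ((Complex.continuous_re.tendsto _).comp (c3 z hz))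
      (Eventually.of_forall (fun m => (hq _).re z hz)), by
      have h1 := (Complex.continuous_im.tendsto _).comp (c3 0 (by simp))
      refine tendsto_nhds_unique h1 ?_
      refine tendsto_const_nhds.congr (fun m => ?_)
      exact ((hq _).im).symm⟩
  have hy' : Tendsto (fun m => x (σ1 (σ2 (σ3 m)))) atTop (𝓝 y) :=
    hy.comp (hσ1.comp (hσ2.comp hσ3)).tendsto_atTop
  refine ⟨q', Q', ψ', hqZ, hQs, hψs, ?_, ?_, ?_, ?_⟩
  · have h1 := (Complex.continuous_re.tendsto _).comp (c3 0 (by simp))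
    refine tendsto_nhds_unique h1 (hy'.congr (fun m => ?_))
    exact (hqx _).symm
  · intro t ht
    have h1 : Tendsto (fun m => Mf n (q (σ1 (σ2 (σ3 m)))) t) atTop (𝓝 (Mf n q' t)) := by
      unfold Mf
      apply tendsto_finsetSum
      intro i _
      exact ((((hc3 (i + 1)).norm.pow 2).const_mul _).sub_const _).const_mul _
    exact le_of_tendsto_of_tendsto h1 (hy'.const_mul ε) (Eventually.of_forall (fun m => hM _ t ht))
  · intro w hw
    have hw' : ‖(ρ : ℂ) * w‖ < 1 := by
      rw [norm_mul, Complex.norm_real, Real.norm_of_nonneg hρ.le]; nlinarith [norm_nonneg w]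
    have h1 := (c2 _ hw').comp hσ3.tendsto_atTop
    have h2 : Tendsto (fun m => (ρ : ℂ) * kap (q (σ1 (σ2 (σ3 m)))) w) atTop (𝓝 (ρ * kap q' w)) :=
      (((Complex.continuous_exp.tendsto _).comp (c3 w hw).neg).const_mul w).const_mul _
    refine tendsto_nhds_unique h1 (h2.congr (fun m => ?_))
    exact (hQρ _ w hw).symm
  · intro z hz
    have h1 := hv2 (fun m => ψ (σ1 (σ2 m)) z) (ψ' z) (hψs.lt z hz) ((c1 z hz).comp hσ2.tendsto_atTop)
    refine tendsto_nhds_unique (tendsto_const_nhds.congr (fun m => ?_)) h1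
    exact hφ _ z hz

theorem sup_arg (n : ℕ) {ε ρ T : ℝ} {φ : ℂ → ℂ} (hε : 0 < ε) (hρ : 0 < ρ) (hρ1 : ρ < 1)
    (hφ : Sm φ) (hinj : InjOn φ (ball 0 1)) (hd : ∀ z : ℂ, ‖z‖ < 1 → deriv φ z ≠ 0)
    (hT : deriv φ 0 = Real.exp (-T)) :
    ∃ q : ℂ → ℂ, Zc q ∧ Mf n q 0 ≤ ε * T ∧ ∀ w : ℂ, ‖w‖ < 1 → φ (ρ * w) = ρ * kap q w := by
  have hbdd : BddAbove {x | Adm n ε ρ φ x} := ⟨T, fun x hx => adm_le hρ hT hx⟩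
  have hmem := (adm_closed (n := n) (ε := ε) hρ hρ1 hT).csSup_mem ⟨0, adm_zero n ε ρ hφ⟩ hbdd
  set x := sSup {x | Adm n ε ρ φ x} with hx
  have hxT : x ≤ T := adm_le hρ hT hmem
  obtain ⟨q, Q, ψ, hq, hQ, hψ, hqx, hM, hQρ, hφQ⟩ := hmem
  have hx0 : 0 ≤ x := by rw [← hqx]; exact hq.re 0 (by simp)
  have hder0 := chain_at hQ hψ hφQ (z := 0) (by simp)
  rw [hψ.zero, deriv_of_scaled hρ hQ.hol hq hQρ, hT, hqx] at hder0
  have hψ0 : deriv ψ 0 = ((Real.exp (x - T) : ℝ) : ℂ) := by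
    have e : ((Real.exp (x - T) : ℝ) : ℂ) * ((Real.exp (-x) : ℝ) : ℂ) = ((Real.exp (-T) : ℝ) : ℂ) := by
      rw [← Complex.ofReal_mul, ← Real.exp_add]; congr 2; ring
    have : ((Real.exp (-x) : ℝ) : ℂ) ≠ 0 := by exact_mod_cast (Real.exp_pos _).ne'
    apply mul_left_cancel₀ this
    rw [← hder0, ← e]; ring
  rcases hxT.lt_or_eq with hlt | heq
  · exfalso
    obtain ⟨δ, hδ, hstep⟩ := step_lemma n T ε (hx0.trans hxT) hε
    obtain ⟨a, ha, ha1, hψa⟩ := escape hψ (fun z hz w hw h => hinj hz hw (by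
        rw [hφQ z (by simpa using hz), hφQ w (by simpa using hw), h]))
      (fun z hz h0 => hd z hz (by rw [chain_at hQ hψ hφQ hz, h0, mul_zero]))
      (by
        rw [hψ0, Complex.norm_real, Real.norm_of_nonneg (Real.exp_pos _).le, Real.exp_lt_one_iff]
        linarith) (max ρ (Real.exp (-δ))) (max_lt hρ1 (Real.exp_lt_one_iff.2 (by linarith)))
    obtain ⟨β, v, χ, hβ, hβ1, hv, hχ, hψχ⟩ := koebe_step hψ (le_max_of_le_left hρ.le) ha ha1 hψa
    have hβρ : ρ < β := (le_max_left _ _).trans_lt hβ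
    have hβδ : Real.exp (-δ) < β := (le_max_right _ _).trans_lt hβ
    have hβ0 : 0 < β := hρ.trans hβρ
    obtain ⟨r, hr, hr0, hrK⟩ := KB_zc hρ hβρ hβ1 hv
    have hrpos : 0 < (r 0).re := by rw [hr0]; linarith [Real.log_neg hβ0 hβ1]
    have hrδ : (r 0).re ≤ δ := by
      rw [hr0]
      have := (Real.lt_log_iff_exp_lt hβ0).2 hβδ
      linarith
    have hval : (r 0 + q (kap r 0)).re = x + (r 0).re := by
      rw [kap_zero, Complex.add_re, hqx]; ring
    have hadm : Adm n ε ρ φ (x + (r 0).re) := by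
      refine ⟨fun z => r z + q (kap r z), fun z => Q (KB β v z), χ, hq.compose hr,
        hQ.comp (KB_sm hβ0 hβ1 hv), hχ, hval, ?_, ?_, ?_⟩
      · intro t ht
        have h1 := hstep q r hq hr (by rw [hqx]; exact hxT) hrpos hrδ t ht
        have h2 := hM (t + (r 0).re) (by linarith)
        linarith
      · intro w hw
        simp only []
        rw [hrK w hw, hQρ _ (hr.kap_lt hw), kap_compose]
      · intro z hz
        simp only []
        rw [hφQ z hz, hψχ z hz]
    have := le_csSup hbdd hadm
    rw [← hx] at this
    linarith
  · refine ⟨q, hq, by rw [← heq]; exact hM 0 le_rfl, ?_⟩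
    have hψ1 : deriv ψ 0 = 1 := by rw [hψ0, heq]; simp
    have hid := Complex.affine_of_mapsTo_ball_of_norm_dslope_eq_div (f := ψ) (c := 0) (R₁ := 1) (R₂ := 1)
      (z₀ := 0) hψ.hol (fun w hw => by
        rw [hψ.zero]; simpa using (hψ.lt w (by simpa using hw)).le) (by simp)
      (by rw [dslope_same, hψ1]; simp)
    intro w hw
    have hw' : ‖(ρ : ℂ) * w‖ < 1 := by
      rw [norm_mul, Complex.norm_real, Real.norm_of_nonneg hρ.le]; nlinarith [norm_nonneg w]
    have h1 := hid (show (ρ : ℂ) * w ∈ ball (0:ℂ) 1 by simpa using hw')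
    simp only [dslope_same, hψ1, hψ.zero] at h1
    rw [hφQ _ hw', h1, ← hQρ w hw]
    simp

end Sup

theorem lm_bound (n : ℕ) {q : ℂ → ℂ} (hq : HolD q) :
    ‖coef (fun w => w * Complex.exp (-(q w))) (n + 1)‖ ≤
      Real.exp (-(q 0).re) * ((n + 1) * Real.exp (Mf n q 0 / (4 * (n + 1)))) := by
  set B : ℂ → ℂ := fun w => Complex.exp (-(q w - q 0) / 2) with hB
  have hBh : HolD B := by
    have h1 : HolD (fun w => -(q w - q 0) / 2) := ((hq.sub_const (q 0)).neg).div_const 2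
    exact h1.cexp
  have hBd : ∀ z : ℂ, ‖z‖ < 1 → deriv B z = (-(1/2)) * deriv q z * B z := by
    intro z hz
    have h1 := (hq.differentiableAt hz).hasDerivAt
    have h2 : HasDerivAt (fun w => -(q w - q 0) / 2) (-(deriv q z) / 2) z :=
      ((h1.sub_const (q 0)).neg).div_const 2
    rw [h2.cexp.deriv]
    simp only [hB]; ring
  have hqd : HolD (fun z => (-(1/2) : ℂ) * deriv q z) := hq.deriv.const_mul _
  have hrec : ∀ k : ℕ, ((k : ℂ) + 1) * coef B (k + 1) = ∑ j ∈ Finset.range (k + 1),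
      ((j : ℂ) + 1) * (-(1/2) * coef q (j + 1)) * coef B (k - j) := by
    intro k
    rw [← coef_deriv, coef_congr hBd, coef_mul hqd hBh]
    apply Finset.sum_congr rfl
    intro j _
    rw [coef_const_mul, coef_deriv]; ring
  have h0 : coef B 0 = 1 := by rw [coef_zero]; simp [hB]
  have hLM := lebedev_milin (fun j => -(1/2) * coef q (j + 1)) (coef B) h0 hrec n
  have hexp : (∑ k ∈ Finset.range n, ((n : ℝ) - k) * ((k + 1) * ‖-(1/2) * coef q (k + 1)‖ ^ 2 - 1 / (k + 1)))
      / (n + 1) = Mf n q 0 / (4 * (n + 1)) := by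
    have : (∑ k ∈ Finset.range n, ((n : ℝ) - k) * ((k + 1) * ‖-(1/2) * coef q (k + 1)‖ ^ 2 - 1 / (k + 1)))
        = Mf n q 0 / 4 := by
      unfold Mf
      rw [Finset.sum_div]
      apply Finset.sum_congr rfl
      intro k hk
      have := Finset.mem_range.1 hk
      rw [tau_zero n (k + 1) (by omega), norm_mul]
      have e : ‖(-(1/2) : ℂ)‖ = 1 / 2 := by simp
      rw [e]
      push_cast; ring
    rw [this, div_div]
  rw [hexp] at hLM
  have hBB : HolD (fun z => B z * B z) := hBh.mul hBh
  have e1 : coef (fun w => w * Complex.exp (-(q w))) (n + 1) =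
      Complex.exp (-(q 0)) * ∑ j ∈ Finset.range (n + 1), coef B j * coef B (n - j) := by
    rw [← coef_mul hBh hBh, ← coef_id_mul hBB, ← coef_const_mul]
    apply coef_congr
    intro z _
    simp only [hB]
    rw [← Complex.exp_add, mul_left_comm, ← Complex.exp_add]
    congr 2; ring
  rw [e1, norm_mul, Complex.norm_exp, Complex.neg_re]
  apply mul_le_mul_of_nonneg_left _ (Real.exp_pos _).le
  refine le_trans ?_ hLM
  calc ‖∑ j ∈ Finset.range (n + 1), coef B j * coef B (n - j)‖
      ≤ ∑ j ∈ Finset.range (n + 1), ‖coef B j * coef B (n - j)‖ := norm_sum_le _ _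
    _ ≤ ∑ j ∈ Finset.range (n + 1), (‖coef B j‖ ^ 2 / 2 + ‖coef B (n - j)‖ ^ 2 / 2) := by
        apply Finset.sum_le_sum
        intro j _
        rw [norm_mul]
        nlinarith [sq_nonneg (‖coef B j‖ - ‖coef B (n - j)‖)]
    _ = ∑ j ∈ Finset.range (n + 1), ‖coef B j‖ ^ 2 := by
        rw [Finset.sum_add_distrib]
        have := Finset.sum_range_reflect (fun j => ‖coef B j‖ ^ 2 / 2) (n + 1)
        simp only [Nat.add_sub_cancel] at this
        rw [this, ← Finset.sum_add_distrib]
        apply Finset.sum_congr rfl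
        intro j _; ring

theorem coef_scale (f : ℂ → ℂ) (c : ℂ) (k : ℕ) :
    coef (fun w => f (c * w)) k = c ^ k * coef f k := by
  have h : ∀ x : ℂ, iteratedDeriv k (fun w => f (c * w)) x = c ^ k * iteratedDeriv k f (c * x) := by
    induction k with
    | zero => intro x; simp
    | succ k ih =>
      intro x
      rw [iteratedDeriv_succ, iteratedDeriv_succ, show iteratedDeriv k (fun w => f (c * w)) =
        fun x => c ^ k * iteratedDeriv k f (c * x) from funext ih, deriv_const_mul_field,
        deriv_comp_mul_left, smul_eq_mul]
      ring
  unfold coef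
  rw [h, mul_zero]; ring

theorem bieb_core (n : ℕ) {ρ T : ℝ} {φ : ℂ → ℂ} (hρ : 0 < ρ) (hρ1 : ρ < 1)
    (hφ : Sm φ) (hinj : InjOn φ (ball 0 1)) (hd : ∀ z : ℂ, ‖z‖ < 1 → deriv φ z ≠ 0)
    (hT : deriv φ 0 = Real.exp (-T)) :
    ρ ^ n * ‖coef φ (n + 1)‖ ≤ Real.exp (-T) * (n + 1) := by
  have key : ∀ ε : ℝ, 0 < ε → ρ ^ n * ‖coef φ (n + 1)‖ ≤
      Real.exp (-T) * ((n + 1) * Real.exp (ε * T / (4 * (n + 1)))) := by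
    intro ε hε
    obtain ⟨q, hq, hM, hw⟩ := sup_arg n hε hρ hρ1 hφ hinj hd hT
    have h1 := deriv_of_scaled hρ hφ.hol hq hw
    rw [hT] at h1
    have h2 : Real.exp (-T) = Real.exp (-(q 0).re) := by exact_mod_cast h1
    have h3 := lm_bound n hq.hol
    have h4 : ρ ^ (n + 1) * ‖coef φ (n + 1)‖ =
        ρ * ‖coef (fun w => w * Complex.exp (-(q w))) (n + 1)‖ := by
      have e : coef (fun w => φ (ρ * w)) (n + 1) =
          ρ * coef (fun w => w * Complex.exp (-(q w))) (n + 1) := by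
        rw [← coef_const_mul]
        exact coef_congr hw _
      rw [coef_scale] at e
      have := congrArg norm e
      simpa [abs_of_pos hρ] using this
    have h5 : ρ ^ n * ‖coef φ (n + 1)‖ = ‖coef (fun w => w * Complex.exp (-(q w))) (n + 1)‖ := by
      apply mul_left_cancel₀ hρ.ne'
      rw [← h4]; ring
    rw [h5, h2]
    refine h3.trans ?_
    gcongr
  have hlim : Filter.Tendsto (fun ε : ℝ => Real.exp (-T) * ((n + 1) * Real.exp (ε * T / (4 * (n + 1)))))
      (nhdsWithin 0 (Ioi 0)) (nhds (Real.exp (-T) * (n + 1))) := by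
    have : Continuous (fun ε : ℝ => Real.exp (-T) * (((n:ℝ) + 1) * Real.exp (ε * T / (4 * (n + 1))))) := by
      fun_prop
    have h := this.tendsto 0
    simp only [zero_mul, zero_div, Real.exp_zero, mul_one] at h
    exact h.mono_left nhdsWithin_le_nhds
  refine ge_of_tendsto hlim ?_
  filter_upwards [self_mem_nhdsWithin] with ε hε
  exact key ε hε

theorem bieb_sm (n : ℕ) {T : ℝ} {φ : ℂ → ℂ}
    (hφ : Sm φ) (hinj : InjOn φ (ball 0 1)) (hd : ∀ z : ℂ, ‖z‖ < 1 → deriv φ z ≠ 0)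
    (hT : deriv φ 0 = Real.exp (-T)) :
    ‖coef φ (n + 1)‖ ≤ Real.exp (-T) * (n + 1) := by
  have hlim : Filter.Tendsto (fun ρ : ℝ => ρ ^ n * ‖coef φ (n + 1)‖) (nhdsWithin 1 (Iio 1))
      (nhds ‖coef φ (n + 1)‖) := by
    have : Continuous (fun ρ : ℝ => ρ ^ n * ‖coef φ (n + 1)‖) := by fun_prop
    have h := this.tendsto 1
    simp only [one_pow, one_mul] at h
    exact h.mono_left nhdsWithin_le_nhds
  refine le_of_tendsto hlim ?_
  filter_upwards [Ioo_mem_nhdsLT (show (0:ℝ) < 1 by norm_num)] with ρ hρ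
  exact bieb_core n hρ.1 hρ.2 hφ hinj hd hT

theorem bieberbach (n : ℕ) {h : ℂ → ℂ} (hh : HolD h) (hinj : InjOn h (ball 0 1))
    (hd : ∀ z : ℂ, ‖z‖ < 1 → deriv h z ≠ 0) (h0 : h 0 = 0) (h1 : deriv h 0 = 1) :
    ‖coef h (n + 1)‖ ≤ n + 1 := by
  have key : ∀ r : ℝ, 0 < r → r < 1 → r ^ n * ‖coef h (n + 1)‖ ≤ n + 1 := by
    intro r hr hr1
    have hsub : closedBall (0:ℂ) r ⊆ ball 0 1 := closedBall_subset_ball hr1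
    obtain ⟨C, hC⟩ := (isCompact_closedBall (0:ℂ) r).exists_bound_of_continuousOn
      (hh.continuousOn.mono hsub)
    set R : ℝ := |C| + 1 with hR
    have hRp : 0 < R := by positivity
    have hsc : ∀ z : ℂ, ‖z‖ < 1 → ‖(r:ℂ) * z‖ < r := by
      intro z hz
      rw [norm_mul, Complex.norm_real, Real.norm_of_nonneg hr.le]
      nlinarith
    have hder : ∀ z : ℂ, ‖z‖ < 1 → HasDerivAt (fun z : ℂ => (R:ℂ)⁻¹ * h (r * z))
        ((R:ℂ)⁻¹ * (deriv h (r * z) * r)) z := by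
      intro z hz
      have a := (hh.differentiableAt (z := r * z) ((hsc z hz).trans hr1)).hasDerivAt
      have b : HasDerivAt (fun w : ℂ => (r : ℂ) * w) r z := by
        simpa using (hasDerivAt_id z).const_mul (r : ℂ)
      exact (a.comp z b).const_mul _
    have hRc : (R:ℂ) ≠ 0 := by exact_mod_cast hRp.ne'
    have hrc : (r:ℂ) ≠ 0 := by exact_mod_cast hr.ne'
    have hsm : Sm (fun z : ℂ => (R:ℂ)⁻¹ * h (r * z)) := by
      refine ⟨?_, ?_, ?_⟩
      · intro z hz
        exact (hder z (by simpa using hz)).differentiableAt.differentiableWithinAt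
      · intro z hz
        have := hC (r * z) (by simpa using (hsc z hz).le)
        rw [norm_mul, norm_inv, Complex.norm_real, Real.norm_of_nonneg hRp.le, inv_mul_lt_iff₀ hRp]
        have := le_abs_self C
        linarith
      · simp [h0]
    have hin : InjOn (fun z : ℂ => (R:ℂ)⁻¹ * h (r * z)) (ball 0 1) := by
      intro x hx y hy hxy
      have e := mul_left_cancel₀ (inv_ne_zero hRc) hxy
      have := hinj (by simpa using (hsc x (by simpa using hx)).trans hr1)
        (by simpa using (hsc y (by simpa using hy)).trans hr1) e
      exact mul_left_cancel₀ hrc this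
    have hdd : ∀ z : ℂ, ‖z‖ < 1 → deriv (fun z : ℂ => (R:ℂ)⁻¹ * h (r * z)) z ≠ 0 := by
      intro z hz
      rw [(hder z hz).deriv]
      exact mul_ne_zero (inv_ne_zero hRc) (mul_ne_zero (hd _ ((hsc z hz).trans hr1)) hrc)
    have hT : deriv (fun z : ℂ => (R:ℂ)⁻¹ * h (r * z)) 0 = Real.exp (-(-Real.log (R⁻¹ * r))) := by
      rw [(hder 0 (by simp)).deriv, neg_neg, Real.exp_log (by positivity), mul_zero, h1]
      push_cast; ring
    have fin := bieb_sm n hsm hin hdd hT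
    have e : coef (fun z : ℂ => (R:ℂ)⁻¹ * h (r * z)) (n + 1) = (R:ℂ)⁻¹ * (r ^ (n + 1) * coef h (n + 1)) := by
      rw [coef_const_mul, coef_scale]
    rw [e, neg_neg, Real.exp_log (by positivity), norm_mul, norm_mul, norm_inv, norm_pow,
      Complex.norm_real, Complex.norm_real, Real.norm_of_nonneg hRp.le, Real.norm_of_nonneg hr.le,
      mul_assoc] at fin
    have f2 := le_of_mul_le_mul_left fin (inv_pos.2 hRp)
    rw [pow_succ' r n, mul_assoc] at f2
    exact le_of_mul_le_mul_left f2 hr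
  have hlim : Filter.Tendsto (fun ρ : ℝ => ρ ^ n * ‖coef h (n + 1)‖) (nhdsWithin 1 (Iio 1))
      (nhds ‖coef h (n + 1)‖) := by
    have : Continuous (fun ρ : ℝ => ρ ^ n * ‖coef h (n + 1)‖) := by fun_prop
    have h := this.tendsto 1
    simp only [one_pow, one_mul] at h
    exact h.mono_left nhdsWithin_le_nhds
  refine le_of_tendsto hlim ?_
  filter_upwards [Ioo_mem_nhdsLT (show (0:ℝ) < 1 by norm_num)] with ρ hρ
  exact key ρ hρ.1 hρ.2

section Smooth
variable {E F : Type*} [NormedAddCommGroup E] [NormedSpace ℂ E] [NormedAddCommGroup F]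
    [NormedSpace ℂ F]

theorem hasFDerivAt_of_quad {g : E → F} {L : E →L[ℂ] F} {x : E} {R K : ℝ} (hR : 0 < R)
    (h : ∀ z ∈ ball x R, ‖g z - g x - L (z - x)‖ ≤ K * ‖z - x‖ ^ 2) : HasFDerivAt g L x := by
  rw [hasFDerivAt_iff_isLittleO]
  have h1 : (fun z => g z - g x - L (z - x)) =O[nhds x] (fun z => ‖z - x‖ ^ 2) := by
    apply Asymptotics.IsBigO.of_bound K
    filter_upwards [ball_mem_nhds x hR] with z hz
    rw [norm_pow, norm_norm]
    exact h z hz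
  refine h1.trans_isLittleO ?_
  have := Asymptotics.isLittleO_pow_sub_sub x (show 1 < 2 by norm_num)
  simpa using this

theorem quad_lim [CompleteSpace F] {f : ℕ → E → F} {g : E → F} {x : E} {R C M : ℝ} (hR : 0 < R)
    (hd : ∀ n, DifferentiableOn ℂ (f n) (ball x R)) (hg : ∀ y ∈ ball x R, ‖g y - g x‖ ≤ C)
    {e : ℕ → ℝ} (he : Filter.Tendsto e Filter.atTop (nhds 0)) (heM : ∀ n, e n ≤ M)
    (hfg : ∀ n, ∀ y ∈ ball x R, ‖f n y - g y‖ ≤ e n) : DifferentiableAt ℂ g x := by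
  have hx : x ∈ ball x R := mem_ball_self hR
  have hm : ∀ n, MapsTo (f n) (ball x R) (closedBall (f n x) (C + 2 * M)) := by
    intro n y hy
    rw [mem_closedBall_iff_norm]
    have h1 := hfg n y hy
    have h2 := hfg n x hx
    have h3 := hg y hy
    have h4 := heM n
    calc ‖f n y - f n x‖ = ‖(f n y - g y) + (g y - g x) - (f n x - g x)‖ := by congr 1; abel
      _ ≤ ‖(f n y - g y) + (g y - g x)‖ + ‖f n x - g x‖ := norm_sub_le _ _
      _ ≤ ‖f n y - g y‖ + ‖g y - g x‖ + ‖f n x - g x‖ := by gcongr; exact norm_add_le _ _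
      _ ≤ _ := by linarith
  have hda : ∀ n, DifferentiableAt ℂ (f n) x := fun n => (hd n).differentiableAt (ball_mem_nhds x hR)
  have hc : ∀ n m, ‖fderiv ℂ (f n) x - fderiv ℂ (f m) x‖ ≤ 2 * (e n + e m) / R := by
    intro n m
    rw [← fderiv_sub (hda n) (hda m)]
    refine Complex.norm_fderiv_le_div_of_mapsTo_ball ((hd n).sub (hd m)) ?_ hR
    intro y hy
    rw [mem_closedBall_iff_norm]
    have h1 := hfg n y hy
    have h2 := hfg n x hx
    have h3 := hfg m y hy
    have h4 := hfg m x hx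
    calc ‖(f n - f m) y - (f n - f m) x‖
        = ‖((f n y - g y) - (f n x - g x)) - ((f m y - g y) - (f m x - g x))‖ := by
          simp only [Pi.sub_apply]; congr 1; abel
      _ ≤ ‖(f n y - g y) - (f n x - g x)‖ + ‖(f m y - g y) - (f m x - g x)‖ := norm_sub_le _ _
      _ ≤ (‖f n y - g y‖ + ‖f n x - g x‖) + (‖f m y - g y‖ + ‖f m x - g x‖) := by
          gcongr <;> exact norm_sub_le _ _
      _ ≤ _ := by linarith
  have hcau : CauchySeq (fun n => fderiv ℂ (f n) x) := by
    rw [Metric.cauchySeq_iff]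
    intro ε hε
    have : ∀ᶠ n in Filter.atTop, e n < ε * R / 4 := he.eventually_lt_const (by positivity)
    obtain ⟨N, hN⟩ := Filter.eventually_atTop.1 this
    refine ⟨N, fun m hm n hn => ?_⟩
    rw [dist_eq_norm]
    refine (hc m n).trans_lt ?_
    rw [div_lt_iff₀ hR]
    linarith [hN m hm, hN n hn]
  obtain ⟨L, hL⟩ := cauchySeq_tendsto_of_complete hcau
  have hpt : ∀ y ∈ ball x R, Filter.Tendsto (fun n => f n y) Filter.atTop (nhds (g y)) := by
    intro y hy
    rw [tendsto_iff_norm_sub_tendsto_zero]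
    exact squeeze_zero (fun _ => norm_nonneg _) (fun n => hfg n y hy) he
  refine (hasFDerivAt_of_quad (L := L) (K := 2 * (C + 2 * M) / R ^ 2) hR ?_).differentiableAt
  intro z hz
  have hl : Filter.Tendsto (fun n => ‖f n z - f n x - fderiv ℂ (f n) x (z - x)‖) Filter.atTop
      (nhds ‖g z - g x - L (z - x)‖) := by
    refine (((hpt z hz).sub (hpt x hx)).sub ?_).norm
    exact ((ContinuousLinearMap.apply ℂ F (z - x)).continuous.tendsto L).comp hL
  refine le_of_tendsto hl (Filter.Eventually.of_forall fun n => ?_)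
  refine (quad_rem (hd n) (hm n) hz).trans (le_of_eq ?_)
  rw [div_pow]; ring

theorem local_est {U : Set E} (hU : IsOpen U) {f : E → F} (hf : DifferentiableOn ℂ f U) {x : E}
    (hx : x ∈ U) : ∃ R C : ℝ, 0 < R ∧ 0 ≤ C ∧ ball x (4 * R) ⊆ U ∧
      (∀ y ∈ ball x (2 * R), ‖fderiv ℂ f y‖ ≤ C / R) ∧
      ∀ y ∈ ball x (2 * R), ∀ u : E, ‖u‖ < R →
        ‖f (y + u) - f y - fderiv ℂ f y u‖ ≤ 2 * C * (‖u‖ / R) ^ 2 := by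
  have hc : ContinuousAt f x := (hf.differentiableAt (hU.mem_nhds hx)).continuousAt
  have h1 : ∀ᶠ y in nhds x, y ∈ U ∧ ‖f y - f x‖ < 1 := by
    refine (hU.eventually_mem hx).and ?_
    have := hc (ball_mem_nhds (f x) one_pos)
    filter_upwards [this] with y hy
    exact mem_ball_iff_norm.1 hy
  obtain ⟨r, hr, hb⟩ := Metric.eventually_nhds_iff_ball.1 h1
  have hsub : ∀ y ∈ ball x (2 * (r / 4)), ball y (r / 4) ⊆ ball x r := by
    intro y hy
    apply ball_subset_ball'
    rw [mem_ball] at hy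
    linarith
  have hm : ∀ y ∈ ball x (2 * (r / 4)), MapsTo f (ball y (r / 4)) (closedBall (f y) 2) := by
    intro y hy z hz
    rw [mem_closedBall_iff_norm]
    have a := (hb z (hsub y hy hz)).2
    have b := (hb y (hsub y hy (mem_ball_self (by positivity)))).2
    calc ‖f z - f y‖ = ‖(f z - f x) - (f y - f x)‖ := by congr 1; abel
      _ ≤ ‖f z - f x‖ + ‖f y - f x‖ := norm_sub_le _ _
      _ ≤ 2 := by linarith
  have hdd : ∀ y ∈ ball x (2 * (r / 4)), DifferentiableOn ℂ f (ball y (r / 4)) := fun y hy =>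
    hf.mono (fun z hz => (hb z (hsub y hy hz)).1)
  refine ⟨r / 4, 2, by positivity, by norm_num, ?_, ?_, ?_⟩
  · intro z hz
    exact (hb z (by rwa [show 4 * (r / 4) = r by ring] at hz)).1
  · intro y hy
    exact Complex.norm_fderiv_le_div_of_mapsTo_ball (hdd y hy) (hm y hy) (by positivity)
  · intro y hy u hu
    have := quad_rem (hdd y hy) (hm y hy) (z := y + u) (by simpa [mem_ball_iff_norm] using hu)
    simpa using this

theorem fderiv_apply_diff [CompleteSpace F] {U : Set E} (hU : IsOpen U) {f : E → F}
    (hf : DifferentiableOn ℂ f U) {x : E} (hx : x ∈ U) (v : E) :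
    DifferentiableAt ℂ (fun y => fderiv ℂ f y v) x := by
  obtain ⟨R, C, hR, hC, hsub, hb, hq⟩ := local_est hU hf hx
  set δ : ℝ := R / (‖v‖ + 1) with hδ
  have hvp : 0 < ‖v‖ + 1 := by positivity
  have hδp : 0 < δ := by positivity
  set t : ℕ → ℝ := fun n => δ * (1 / ((n : ℝ) + 1)) with ht
  have htp : ∀ n, 0 < t n := fun n => by simp only [ht]; positivity
  have htδ : ∀ n, t n ≤ δ := fun n => by
    simp only [ht]
    have : 1 / ((n : ℝ) + 1) ≤ 1 := by
      rw [div_le_one (by positivity)]; linarith [(Nat.cast_nonneg n : (0:ℝ) ≤ n)]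
    nlinarith
  have htv : ∀ n, ‖(t n : ℂ) • v‖ = t n * ‖v‖ := fun n => by
    rw [norm_smul, Complex.norm_real, Real.norm_of_nonneg (htp n).le]
  have htR : ∀ n, ‖(t n : ℂ) • v‖ < R := fun n => by
    rw [htv]
    calc t n * ‖v‖ ≤ δ * ‖v‖ := by gcongr; exact htδ n
      _ < δ * (‖v‖ + 1) := by gcongr; linarith
      _ = R := by rw [hδ]; field_simp
  have ht0 : Filter.Tendsto t Filter.atTop (nhds 0) := by
    have := (tendsto_one_div_add_atTop_nhds_zero_nat (𝕜 := ℝ)).const_mul δ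
    rwa [mul_zero] at this
  refine quad_lim (f := fun n y => (t n : ℂ)⁻¹ • (f (y + (t n : ℂ) • v) - f y)) (R := 2 * R)
    (C := 2 * (C / R * ‖v‖)) (e := fun n => 2 * C * (‖v‖ / R) ^ 2 * t n)
    (M := 2 * C * (‖v‖ / R) ^ 2 * δ) (by positivity) ?_ ?_ ?_ ?_ ?_
  · intro n y hy
    rw [mem_ball_iff_norm] at hy
    have h1 : y ∈ U := hsub (by rw [mem_ball_iff_norm]; linarith)
    have h2 : y + (t n : ℂ) • v ∈ U := hsub (by
      rw [mem_ball_iff_norm]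
      calc ‖y + (t n : ℂ) • v - x‖ = ‖(y - x) + (t n : ℂ) • v‖ := by congr 1; abel
        _ ≤ _ := norm_add_le _ _
        _ < 4 * R := by linarith [htR n])
    have d1 := hf.differentiableAt (hU.mem_nhds h1)
    have d2 := hf.differentiableAt (hU.mem_nhds h2)
    have d3 : DifferentiableAt ℂ (fun y => f (y + (t n : ℂ) • v)) y :=
      d2.comp (f := fun y => y + (t n : ℂ) • v) y (differentiableAt_id.add_const _)
    exact ((d3.sub d1).const_smul _).differentiableWithinAt
  · intro y hy
    have h1 : ‖fderiv ℂ f y v‖ ≤ C / R * ‖v‖ :=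
      ((fderiv ℂ f y).le_opNorm v).trans (by gcongr; exact hb y hy)
    have h2 : ‖fderiv ℂ f x v‖ ≤ C / R * ‖v‖ :=
      ((fderiv ℂ f x).le_opNorm v).trans (by gcongr; exact hb x (mem_ball_self (by positivity)))
    refine (norm_sub_le _ _).trans (by linarith)
  · simpa using ht0.const_mul (2 * C * (‖v‖ / R) ^ 2)
  · intro n
    have := htδ n
    gcongr
  · intro n y hy
    have h := hq y hy _ (htR n)
    have hne : (t n : ℂ) ≠ 0 := by exact_mod_cast (htp n).ne'
    have e : (t n : ℂ)⁻¹ • (f (y + (t n : ℂ) • v) - f y) - fderiv ℂ f y v =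
        (t n : ℂ)⁻¹ • (f (y + (t n : ℂ) • v) - f y - fderiv ℂ f y ((t n : ℂ) • v)) := by
      rw [map_smul, smul_sub _ (f (y + (t n : ℂ) • v) - f y), smul_smul, inv_mul_cancel₀ hne, one_smul]
    show ‖(t n : ℂ)⁻¹ • (f (y + (t n : ℂ) • v) - f y) - fderiv ℂ f y v‖ ≤ 2 * C * (‖v‖ / R) ^ 2 * t n
    rw [e, norm_smul, norm_inv, Complex.norm_real, Real.norm_of_nonneg (htp n).le,
      inv_mul_le_iff₀ (htp n)]
    rw [htv] at h
    refine h.trans (le_of_eq ?_)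
    rw [div_pow, div_pow]; ring

theorem fderiv_diff [CompleteSpace F] {U : Set E} (hU : IsOpen U) {f : E → F}
    (hf : DifferentiableOn ℂ f U) : DifferentiableOn ℂ (fderiv ℂ f) U := by
  intro x hx
  apply DifferentiableAt.differentiableWithinAt
  obtain ⟨R, C, hR, hC, hsub, hb, hq⟩ := local_est hU hf hx
  have hsub2 : ball x (2 * R) ⊆ U := (ball_subset_ball (by linarith)).trans hsub
  have hxm : x ∈ ball x (2 * R) := mem_ball_self (by positivity)
  have hdv : ∀ v : E, DifferentiableOn ℂ (fun y => fderiv ℂ f y v) (ball x (2 * R)) :=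
    fun v y hy => (fderiv_apply_diff hU hf (hsub2 hy) v).differentiableWithinAt
  have hmv : ∀ v : E, MapsTo (fun y => fderiv ℂ f y v) (ball x (2 * R))
      (closedBall (fderiv ℂ f x v) (2 * (C / R * ‖v‖))) := by
    intro v y hy
    rw [mem_closedBall_iff_norm]
    have h1 : ‖fderiv ℂ f y v‖ ≤ C / R * ‖v‖ :=
      ((fderiv ℂ f y).le_opNorm v).trans (by gcongr; exact hb y hy)
    have h2 : ‖fderiv ℂ f x v‖ ≤ C / R * ‖v‖ :=
      ((fderiv ℂ f x).le_opNorm v).trans (by gcongr; exact hb x hxm)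
    refine (norm_sub_le _ _).trans (by linarith)
  let L0 : E →ₗ[ℂ] (E →L[ℂ] F) :=
    { toFun := fun v => fderiv ℂ (fun y => fderiv ℂ f y v) x
      map_add' := by
        intro v w
        rw [← fderiv_fun_add (fderiv_apply_diff hU hf hx v) (fderiv_apply_diff hU hf hx w)]
        simp
      map_smul' := by
        intro c v
        simp only [map_smul, RingHom.id_apply]
        exact fderiv_fun_const_smul (fderiv_apply_diff hU hf hx v) c }
  let L : E →L[ℂ] (E →L[ℂ] F) := (L0.mkContinuous (2 * (C / R) / (2 * R)) (by
    intro v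
    refine (Complex.norm_fderiv_le_div_of_mapsTo_ball (hdv v) (hmv v) (by positivity)).trans
      (le_of_eq ?_)
    ring)).flip
  refine (hasFDerivAt_of_quad (L := L) (K := 2 * (2 * (C / R)) / (2 * R) ^ 2)
    (show 0 < 2 * R by positivity) ?_).differentiableAt
  intro z hz
  apply ContinuousLinearMap.opNorm_le_bound _ (by positivity)
  intro v
  have := quad_rem (hdv v) (hmv v) hz
  have e : (fderiv ℂ f z - fderiv ℂ f x - L (z - x)) v = fderiv ℂ f z v - fderiv ℂ f x v -
    fderiv ℂ (fun y => fderiv ℂ f y v) x (z - x) := rfl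
  rw [e]
  refine this.trans (le_of_eq ?_)
  rw [div_pow]; ring

end Smooth

theorem contDiffOn_of_holo.{u} (n : ℕ) : ∀ {E F : Type u} [NormedAddCommGroup E] [NormedSpace ℂ E] [NormedAddCommGroup F]
    [NormedSpace ℂ F] [CompleteSpace F] {U : Set E} (_ : IsOpen U) {f : E → F}
    (_ : DifferentiableOn ℂ f U), ContDiffOn ℂ n f U := by
  induction n with
  | zero => 
    intro E F _ _ _ _ _ U hU f hf
    exact contDiffOn_zero.2 hf.continuousOn
  | succ n ih =>
    intro E F _ _ _ _ _ U hU f hf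
    push_cast
    rw [contDiffOn_succ_iff_fderiv_of_isOpen hU]
    refine ⟨hf, by simp, ih hU (fderiv_diff hU hf)⟩

theorem iteratedFDeriv_line {X Y : Type*} [NormedAddCommGroup X] [NormedSpace ℂ X]
    [NormedAddCommGroup Y] [NormedSpace ℂ Y] {F : X → Y} (s : ℕ)
    (hF : ContDiffOn ℂ s F (ball 0 1)) (w : X) :
    iteratedFDeriv ℂ s F 0 (fun _ => w) = iteratedDeriv s (fun ζ : ℂ => F (ζ • w)) 0 := by
  set g : ℂ →L[ℂ] X := (ContinuousLinearMap.id ℂ ℂ).smulRight w with hg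
  have hgz : ∀ ζ : ℂ, g ζ = ζ • w := fun ζ => by simp [hg]
  have ho : IsOpen (ball (0:X) 1) := isOpen_ball
  have hop : IsOpen (g ⁻¹' ball (0:X) 1) := ho.preimage g.continuous
  have h0 : g 0 ∈ ball (0:X) 1 := by simp
  have h := g.iteratedFDerivWithin_comp_right hF ho.uniqueDiffOn hop.uniqueDiffOn (x := 0) h0 (i := s) le_rfl
  rw [iteratedFDerivWithin_of_isOpen _ hop h0, iteratedFDerivWithin_of_isOpen _ ho h0] at h
  rw [iteratedDeriv_eq_iteratedFDeriv]
  rw [show (fun ζ : ℂ => F (ζ • w)) = F ∘ g from funext fun ζ => by simp [hgz], h]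
  simp [hgz]

/-- **Bieberbach conjecture** for normalized biholomorphic mappings of the form
`F(x) = f(x)·x` on the unit ball `𝔹` of a complex Banach space: if `F(0) = 0` and
`DF(0) = I` (equivalently `f(0) = 1`) and `F` is biholomorphic on `𝔹`, then for every
`s ≥ 1` and every `w` with `‖w‖ = 1`, `‖(1/s!)·DˢF(0)(w,…,w)‖ ≤ s`. -/
theorem stmt4 {X : Type*} [NormedAddCommGroup X] [NormedSpace ℂ X] [CompleteSpace X]
    (f : X → ℂ) (hf : DifferentiableOn ℂ f (ball (0 : X) 1)) (hf0 : f 0 = 1)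
    (F : X → X) (hF : ∀ x ∈ ball (0 : X) 1, F x = f x • x)
    (hF0 : F 0 = 0) (hDF0 : fderiv ℂ F 0 = ContinuousLinearMap.id ℂ X)
    (hbi : IsBiholoOn F (ball (0 : X) 1)) :
    ∀ s : ℕ, 1 ≤ s → ∀ w : X, ‖w‖ = 1 →
      ‖((s.factorial : ℂ))⁻¹ • iteratedFDeriv ℂ s F 0 (fun _ => w)‖ ≤ s := by
  intro s hs w hw
  obtain ⟨hFd, hFi, g, hgd, hgF⟩ := hbi
  have hw0 : w ≠ 0 := by intro h; rw [h] at hw; simp at hw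
  have hmem : ∀ ζ : ℂ, ‖ζ‖ < 1 → ζ • w ∈ ball (0:X) 1 := by
    intro ζ hζ; simpa [norm_smul, hw] using hζ
  set h : ℂ → ℂ := fun ζ => ζ * f (ζ • w) with hh
  have hFh : ∀ ζ : ℂ, ‖ζ‖ < 1 → F (ζ • w) = h ζ • w := by
    intro ζ hζ
    rw [hF _ (hmem ζ hζ), smul_smul, hh, mul_comm]
  have hline : ∀ ζ : ℂ, HasDerivAt (fun ζ : ℂ => ζ • w) w ζ := fun ζ => by
    simpa using (hasDerivAt_id ζ).smul_const w
  have hfl : HolD (fun ζ : ℂ => f (ζ • w)) := by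
    intro ζ hζ
    have hζ' : ‖ζ‖ < 1 := by simpa using hζ
    have h1 := hf.differentiableAt (isOpen_ball.mem_nhds (hmem ζ hζ'))
    exact (h1.comp (f := fun ζ : ℂ => ζ • w) ζ (hline ζ).differentiableAt).differentiableWithinAt
  have hhol : HolD h := holD_id.mul hfl
  have h0 : h 0 = 0 := by simp [hh]
  have h1 : deriv h 0 = 1 := by
    rw [← coef_one]
    have := coef_id_mul hfl 0
    rw [coef_zero] at this
    simpa [hf0] using this
  have hinj : InjOn h (ball 0 1) := by
    intro a ha b hb hab
    have ha' : ‖a‖ < 1 := by simpa using ha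
    have hb' : ‖b‖ < 1 := by simpa using hb
    have := hFi (hmem a ha') (hmem b hb') (by rw [hFh a ha', hFh b hb', hab])
    exact smul_left_injective ℂ hw0 this
  have hder : ∀ z : ℂ, ‖z‖ < 1 → deriv h z ≠ 0 := by
    intro z hz hz0
    have hD : ball (0:ℂ) 1 ∈ nhds z := isOpen_ball.mem_nhds (by simpa using hz)
    have hc : HasDerivWithinAt (fun ζ : ℂ => F (ζ • w)) 0 (ball 0 1) z := by
      have a : HasDerivAt (fun ζ => h ζ • w) (0 • w) z := by
        have := (hhol.differentiableAt hz).hasDerivAt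
        rw [hz0] at this
        simpa using this.smul_const w
      rw [zero_smul] at a
      refine a.hasDerivWithinAt.congr (fun ζ hζ => hFh ζ (by simpa using hζ)) (hFh z hz)
    have hg1 := (hgd _ (mem_image_of_mem F (hmem z hz))).hasFDerivWithinAt
    have hcomp := hg1.comp_hasDerivWithinAt z hc (fun ζ hζ => mem_image_of_mem F (hmem ζ (by simpa using hζ)))
    have hcomp2 : HasDerivWithinAt (fun ζ : ℂ => ζ • w) 0 (ball 0 1) z := by
      rw [map_zero] at hcomp
      exact hcomp.congr (fun ζ hζ => (hgF _ (hmem ζ (by simpa using hζ))).symm) (hgF _ (hmem z hz)).symm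
    have := (hcomp2.hasDerivAt hD).unique (hline z)
    exact hw0 this.symm
  have hcd : ContDiffOn ℂ s F (ball 0 1) := contDiffOn_of_holo s isOpen_ball hFd
  rw [iteratedFDeriv_line s hcd]
  have e1 : iteratedDeriv s (fun ζ : ℂ => F (ζ • w)) 0 = iteratedDeriv s (fun ζ : ℂ => h ζ • w) 0 := by
    apply Filter.EventuallyEq.iteratedDeriv_eq
    filter_upwards [isOpen_ball.mem_nhds (show (0:ℂ) ∈ ball (0:ℂ) 1 by simp)] with z hz
    exact hFh z (by simpa using hz)
  have e2 : iteratedDeriv s (fun ζ : ℂ => h ζ • w) 0 = iteratedDeriv s h 0 • w := by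
    have := ((ContinuousLinearMap.id ℂ ℂ).smulRight w).iteratedFDeriv_comp_left (hhol.contDiffAt s)
      (i := s) le_rfl
    rw [iteratedDeriv_eq_iteratedFDeriv, iteratedDeriv_eq_iteratedFDeriv]
    rw [show (fun ζ : ℂ => h ζ • w) = ((ContinuousLinearMap.id ℂ ℂ).smulRight w) ∘ h from
      funext fun ζ => by simp, this]
    simp
  rw [e1, e2, smul_smul, norm_smul, hw, mul_one]
  obtain ⟨n, rfl⟩ : ∃ n, s = n + 1 := ⟨s - 1, by omega⟩
  have := bieberbach n hhol hinj hder h0 h1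
  unfold coef at this
  push_cast
  exact this
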